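/- Let B be a unital complex algebra, (M, E : M → B) a B-probability space, D ⊆ B a unital subalgebra, and F : B → D a conditional expectation satisfying the faithfulness condition. Let X₁, …, Xₙ ∈ M. Then X₁, …, Xₙ are free from B with amalgamation over D (with respect to F∘E) if and only if their B-valued cumulant series satisfies k^{X₁,…,Xₙ}_{B; i₁,…,i_k}(b₁, …, b_{k−1}) = F( k^{X₁,…,Xₙ}_{B; i₁,…,i_k}(F(b₁), …, F(b_{k−1})) ) for all k ≥ 1, all indices i₁, …, i_k ∈ {1, …, n} and all b₁, …, b_{k−1} ∈ B; equivalently, if and only if k^{X₁,…,Xₙ}_{B; i₁,…,i_k}(b₁, …, b_{k−1}) = k^{X₁,…,Xₙ}_{D; i₁,…,i_k}(F(b₁), …, F(b_{k−1})) for all such k, indices and b_j, where the D-valued cumulant series is computed in the D-probability space (M, F∘E). -/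

import Mathlib

open scoped Classical

noncomputable section

namespace OVFree

variable {B M : Type*}

/-- `P` is a set partition of `{1, …, n}` (modelled on `Fin n`): its blocks are
nonempty and every point lies in exactly one block. -/
def IsPartition {n : ℕ} (P : Finset (Finset (Fin n))) : Prop :=
  (∀ t ∈ P, t.Nonempty) ∧ ∀ i : Fin n, ∃! t, t ∈ P ∧ i ∈ t

/-- A set partition is non-crossing if there are no `a < b < c < d` with `a, c` in one
block and `b, d` in a different block. -/
def IsNonCrossing {n : ℕ} (P : Finset (Finset (Fin n))) : Prop :=
  ∀ a b c d : Fin n, a < b → b < c → c < d →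
    ∀ t ∈ P, ∀ u ∈ P, a ∈ t → c ∈ t → b ∈ u → d ∈ u → t = u

/-- `NC n`: the (finite) set of non-crossing partitions of `{1, …, n}`. -/
def NC (n : ℕ) : Finset (Finset (Finset (Fin n))) :=
  Finset.univ.filter fun P => IsPartition P ∧ IsNonCrossing P

/-- `i` is the least element of its block of `P`. -/
def IsBlockMin {n : ℕ} (P : Finset (Finset (Fin n))) (i : Fin n) : Prop :=
  ∀ t ∈ P, i ∈ t → ∀ j ∈ t, i ≤ j

/-- `i` is the greatest element of its block of `P`. -/
def IsBlockMax {n : ℕ} (P : Finset (Finset (Fin n))) (i : Fin n) : Prop :=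
  ∀ t ∈ P, i ∈ t → ∀ j ∈ t, j ≤ i

section Brack

variable [Ring B] [Algebra ℂ B] [Ring M] [Algebra ℂ M]

/-- A multiplicative map `⟨⋯⟩ : ⋃ₙ Mⁿ → B` (tuples are encoded as lists): a sequence of
`ℂ`-multilinear maps which is `B`-balanced in the sense of Speicher.  Here `ι : B →ₐ[ℂ] M`
is the inclusion of `B` as a unital subalgebra of `M`. -/
structure MultiplicativeMap (ι : B →ₐ[ℂ] M) where
  toFun : List M → B
  map_add : ∀ (pre : List M) (x y : M) (post : List M),
    toFun (pre ++ (x + y) :: post) = toFun (pre ++ x :: post) + toFun (pre ++ y :: post)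
  map_smul : ∀ (pre : List M) (c : ℂ) (x : M) (post : List M),
    toFun (pre ++ (c • x) :: post) = c • toFun (pre ++ x :: post)
  B_left : ∀ (b : B) (x : M) (post : List M),
    toFun ((ι b * x) :: post) = b * toFun (x :: post)
  B_right : ∀ (pre : List M) (x : M) (b : B),
    toFun (pre ++ [x * ι b]) = toFun (pre ++ [x]) * b
  B_mid : ∀ (pre : List M) (x : M) (b : B) (y : M) (post : List M),
    toFun (pre ++ (x * ι b) :: y :: post) = toFun (pre ++ x :: (ι b * y) :: post)

/-- Auxiliary operation: multiply the most recently collected argument of an open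
bracket (arguments are stored in reverse order) on the right by `ι b`. -/
def closeArg (ι : B →ₐ[ℂ] M) (b : B) : List M → List M
  | [] => []
  | a :: t => (a * ι b) :: t

/-- One step of the evaluation of the bracketing `π⟨m₁, …, mₙ⟩`.  The state consists of a
stack of argument lists (in reverse order) for the currently open brackets, together with
the product of the values of the already closed outermost brackets.  When `i` is the least
element of its block a new bracket is opened; `m i` is appended to the innermost open
bracket; when `i` is the greatest element of its block the innermost bracket `⟨…⟩` is
evaluated via `κ` and its value is multiplied into the preceding argument of the enclosing
bracket (per the insertion rule), resp. into the outer product (per the disjoint-union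
rule). -/
def bracketingStep (κ : List M → B) (ι : B →ₐ[ℂ] M) {n : ℕ} (P : Finset (Finset (Fin n)))
    (m : Fin n → M) (s : List (List M) × B) (i : Fin n) : List (List M) × B :=
  let st₁ : List (List M) := if IsBlockMin P i then [] :: s.1 else s.1
  let st₂ : List (List M) :=
    match st₁ with
    | [] => []
    | ts :: rest => (m i :: ts) :: rest
  if IsBlockMax P i then
    match st₂ with
    | [] => ([], s.2)
    | ts :: rest =>
        let b := κ ts.reverse
        match rest with
        | [] => ([], s.2 * b)
        | us :: rest' => (closeArg ι b us :: rest', s.2)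
  else (st₂, s.2)

/-- The bracketing `π⟨m₁, …, mₙ⟩ ∈ B` determined by a non-crossing partition `P` and a
multiplicative map `κ`: each block of `P` is interpreted as a bracket `⟨⋯⟩`, inner blocks
being inserted (as elements of `B`) after the preceding element of the enclosing block,
and the values of the outermost brackets being multiplied in order. -/
def bracketing (κ : List M → B) (ι : B →ₐ[ℂ] M) {n : ℕ} (P : Finset (Finset (Fin n)))
    (m : Fin n → M) : B :=
  ((List.finRange n).foldl (bracketingStep κ ι P m) ([], 1)).2

/-- `κ` is the `B`-valued cumulant map `{⋯}_E` of the `B`-probability space `(M, E)`: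
a multiplicative map satisfying the moment–cumulant formula
`E(m₁ ⋯ mₙ) = Σ_{π ∈ NC(n)} π{m₁, …, mₙ}_E`. -/
def IsCumulantMap (ι : B →ₐ[ℂ] M) (E : M →ₗ[ℂ] B) (κ : MultiplicativeMap ι) : Prop :=
  ∀ (n : ℕ) (m : Fin n → M), 0 < n →
    E (((List.finRange n).map m).prod) = ∑ P ∈ NC n, bracketing κ.toFun ι P m

/-- The cumulant series `k_{i₁,…,i_{k+1}}(b₁, …, b_k) = {X_{i₁} b₁, …, X_{i_k} b_k, X_{i_{k+1}}}`
of a family `X₁, …, X_N` with respect to a multiplicative map `κ`. -/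
def cumulantSeries {ι : B →ₐ[ℂ] M} (κ : MultiplicativeMap ι) {N : ℕ} (X : Fin N → M)
    {k : ℕ} (i : Fin (k + 1) → Fin N) (b : Fin k → B) : B :=
  κ.toFun (((List.finRange k).map fun j => X (i j.castSucc) * ι (b j)) ++ [X (i (Fin.last k))])

/-- `E : M → B` is a conditional expectation onto the unital subalgebra `ι(B) ⊆ M`. -/
def IsCondExp (ι : B →ₐ[ℂ] M) (E : M →ₗ[ℂ] B) : Prop :=
  E 1 = 1 ∧ ∀ (b b' : B) (m : M), E (ι b * m * ι b') = b * E m * b'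

/-- The subalgebras `A₁, A₂ ⊆ M` are free with amalgamation (with respect to the
`D`-valued expectation `G`, `D` being a common subalgebra of `A₁` and `A₂`): any
alternating product of `G`-centered elements of `A₁` and `A₂` is `G`-centered. -/
def FreeWithAmalgamation (G : M → B) (A₁ A₂ : Subalgebra ℂ M) : Prop :=
  ∀ l : List (M × Bool), l ≠ [] →
    List.Chain' (fun p q : M × Bool => p.2 ≠ q.2) l →
    (∀ p ∈ l, p.1 ∈ (if p.2 then A₁ else A₂) ∧ G p.1 = 0) →
    G (l.map Prod.fst).prod = 0

end Brack

end OVFree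

open OVFree

namespace OVFree

section Machine
variable {B M : Type*} [Ring B] [Algebra ℂ B] [Ring M] [Algebra ℂ M]

/-- multiply a closed value into a state -/
def pushVal (ι : B →ₐ[ℂ] M) (b : B) : List (List M) × B → List (List M) × B
  | ([], acc) => ([], acc * b)
  | (us :: st, acc) => (closeArg ι b us :: st, acc)

/-- The total sum over all valid runs. -/
def TT (κ : List M → B) (ι : B →ₐ[ℂ] M) : List M → List (List M) × B → B
  | [], ([], acc) => acc
  | [], (_ :: _, _) => 0
  | y :: l, ([], acc) => TT κ ι l (pushVal ι (κ [y]) ([], acc)) + TT κ ι l ([[y]], acc)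
  | y :: l, (us :: st, acc) =>
      TT κ ι l (pushVal ι (κ [y]) (us :: st, acc)) + TT κ ι l ([y] :: us :: st, acc)
      + (TT κ ι l ((y :: us) :: st, acc) + TT κ ι l (pushVal ι (κ (y :: us).reverse) (st, acc)))

/-- one step driven by flags -/
def stepW (κ : List M → B) (ι : B →ₐ[ℂ] M) (s : List (List M) × B) (fm : (Bool × Bool) × M) :
    List (List M) × B :=
  let st₁ : List (List M) := if fm.1.1 = true then [] :: s.1 else s.1
  let st₂ : List (List M) :=
    match st₁ with
    | [] => []
    | ts :: rest => (fm.2 :: ts) :: rest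
  if fm.1.2 = true then
    match st₂ with
    | [] => ([], s.2)
    | ts :: rest =>
        let b := κ ts.reverse
        match rest with
        | [] => ([], s.2 * b)
        | us :: rest' => (closeArg ι b us :: rest', s.2)
  else (st₂, s.2)

/-- flags of a point -/
def flag {n : ℕ} (P : Finset (Finset (Fin n))) (i : Fin n) : Bool × Bool :=
  (decide (IsBlockMin P i), decide (IsBlockMax P i))

theorem bracketingStep_eq (κ : List M → B) (ι : B →ₐ[ℂ] M) {n : ℕ} (P : Finset (Finset (Fin n)))
    (m : Fin n → M) (s : List (List M) × B) (i : Fin n) :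
    bracketingStep κ ι P m s i = stepW κ ι s (flag P i, m i) := by
  unfold bracketingStep stepW flag
  simp only [decide_eq_true_eq]

/-- valid words -/
def Val : ℕ → ℕ → Finset (List (Bool × Bool))
  | 0, 0 => {[]}
  | 0, _ + 1 => ∅
  | n + 1, 0 => (Val n 0).image (List.cons (true, true)) ∪ (Val n 1).image (List.cons (true, false))
  | n + 1, h + 1 => ((Val n (h + 1)).image (List.cons (true, true)) ∪
      (Val n (h + 2)).image (List.cons (true, false))) ∪
      ((Val n (h + 1)).image (List.cons (false, false)) ∪
      (Val n h).image (List.cons (false, true)))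

theorem sum_image_cons (S : Finset (List (Bool × Bool))) (a : Bool × Bool)
    (f : List (Bool × Bool) → B) :
    ∑ w ∈ S.image (List.cons a), f w = ∑ w ∈ S, f (a :: w) :=
  Finset.sum_image (fun x _ y _ h => by simpa using h)

theorem sum_Val (κ : List M → B) (ι : B →ₐ[ℂ] M) (l : List M) : ∀ s : List (List M) × B,
    ∑ w ∈ Val l.length s.1.length, ((w.zip l).foldl (stepW κ ι) s).2 = TT κ ι l s := by
  induction l with
  | nil =>
    rintro ⟨_ | ⟨us, st⟩, acc⟩
    · simp [Val, TT]
    · simp [Val, TT]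
  | cons y l ih =>
    rintro ⟨_ | ⟨us, st⟩, acc⟩
    · simp only [List.length_cons, List.length_nil, Val]
      rw [Finset.sum_union (by
        rw [Finset.disjoint_left]; simp <;> grind)]
      simp only [sum_image_cons, List.zip_cons_cons, List.foldl_cons, TT]
      rw [← ih, ← ih]
      simp [stepW, pushVal]
    · simp only [List.length_cons, Val]
      rw [Finset.sum_union (by
        rw [Finset.disjoint_left]; simp <;> grind), Finset.sum_union (by
        rw [Finset.disjoint_left]; simp <;> grind), Finset.sum_union (by
        rw [Finset.disjoint_left]; simp <;> grind)]
      simp only [sum_image_cons, List.zip_cons_cons, List.foldl_cons, TT]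
      rw [← ih, ← ih, ← ih, ← ih]
      rcases st with _ | ⟨vs, st⟩ <;> simp [stepW, pushVal]

theorem bracketing_eq (κ : List M → B) (ι : B →ₐ[ℂ] M) {n : ℕ} (P : Finset (Finset (Fin n)))
    (m : Fin n → M) :
    bracketing κ ι P m =
      ((((List.finRange n).map (flag P)).zip ((List.finRange n).map m)).foldl
        (stepW κ ι) ([], 1)).2 := by
  unfold bracketing
  rw [List.zip_map', List.foldl_map]
  congr 2
  funext s i
  exact bracketingStep_eq κ ι P m s i

end Machine
end OVFree
namespace OVFree

section Comb

/-- same block -/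
def rel {n : ℕ} (P : Finset (Finset (Fin n))) (i j : Fin n) : Prop := ∃ t ∈ P, i ∈ t ∧ j ∈ t

theorem rel_refl {n : ℕ} {P : Finset (Finset (Fin n))} (hP : IsPartition P) (i : Fin n) :
    rel P i i := by
  obtain ⟨t, ⟨h1, h2⟩, -⟩ := hP.2 i
  exact ⟨t, h1, h2, h2⟩

theorem rel_symm {n : ℕ} {P : Finset (Finset (Fin n))} {i j : Fin n} (h : rel P i j) :
    rel P j i := by
  obtain ⟨t, h1, h2, h3⟩ := h
  exact ⟨t, h1, h3, h2⟩

theorem rel_trans {n : ℕ} {P : Finset (Finset (Fin n))} (hP : IsPartition P) {i j k : Fin n}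
    (h : rel P i j) (h' : rel P j k) : rel P i k := by
  obtain ⟨t, h1, h2, h3⟩ := h
  obtain ⟨u, g1, g2, g3⟩ := h'
  have := (hP.2 j).unique ⟨h1, h3⟩ ⟨g1, g2⟩
  subst this
  exact ⟨t, h1, h2, g3⟩

theorem partition_ext {n : ℕ} {P Q : Finset (Finset (Fin n))} (hP : IsPartition P)
    (hQ : IsPartition Q) (h : ∀ i j, rel P i j → rel Q i j) (h' : ∀ i j, rel Q i j → rel P i j) :
    P = Q := by
  have key : ∀ {P Q : Finset (Finset (Fin n))}, IsPartition P → IsPartition Q →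
      (∀ i j, rel P i j → rel Q i j) → (∀ i j, rel Q i j → rel P i j) → P ⊆ Q := by
    intro P Q hP hQ h h' t ht
    obtain ⟨i, hi⟩ := hP.1 t ht
    obtain ⟨u, ⟨hu, hiu⟩, -⟩ := hQ.2 i
    have : t = u := by
      ext j
      constructor
      · intro hj
        obtain ⟨v, hv, h1, h2⟩ := h i j ⟨t, ht, hi, hj⟩
        rwa [(hQ.2 i).unique ⟨hu, hiu⟩ ⟨hv, h1⟩]
      · intro hj
        obtain ⟨v, hv, h1, h2⟩ := h' i j ⟨u, hu, hiu, hj⟩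
        rwa [(hP.2 i).unique ⟨ht, hi⟩ ⟨hv, h1⟩]
    rwa [this]
  exact (key hP hQ h h').antisymm (key hQ hP h' h)

theorem isBlockMin_iff {n : ℕ} {P : Finset (Finset (Fin n))} (i : Fin n) :
    IsBlockMin P i ↔ ∀ j, rel P i j → i ≤ j := by
  constructor
  · rintro h j ⟨t, ht, hi, hj⟩
    exact h t ht hi j hj
  · intro h t ht hi j hj
    exact h j ⟨t, ht, hi, hj⟩

theorem isBlockMax_iff {n : ℕ} {P : Finset (Finset (Fin n))} (i : Fin n) :
    IsBlockMax P i ↔ ∀ j, rel P i j → j ≤ i := by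
  constructor
  · rintro h j ⟨t, ht, hi, hj⟩
    exact h t ht hi j hj
  · intro h t ht hi j hj
    exact h j ⟨t, ht, hi, hj⟩

theorem nc_rel {n : ℕ} {P : Finset (Finset (Fin n))} (hN : IsNonCrossing P)
    {a b c d : Fin n} (h1 : a < b) (h2 : b < c) (h3 : c < d) (hac : rel P a c)
    (hbd : rel P b d) : rel P a b := by
  obtain ⟨t, ht, ha, hc⟩ := hac
  obtain ⟨u, hu, hb, hd⟩ := hbd
  have := hN a b c d h1 h2 h3 t ht u hu ha hc hb hd
  subst this
  exact ⟨t, ht, ha, hb⟩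

/-- openness is determined by flags -/
theorem open_iff {n : ℕ} {P : Finset (Finset (Fin n))} (hP : IsPartition P) (a j : Fin n) :
    (∃ d, j ≤ d ∧ rel P a d) ↔ ∀ c, c < j → rel P c a → ¬ IsBlockMax P c := by
  constructor
  · rintro ⟨d, hd, had⟩ c hc hca hmax
    have := (isBlockMax_iff c).1 hmax d (rel_trans hP hca had)
    exact absurd (lt_of_lt_of_le hc hd) (not_lt.2 this)
  · intro h
    have hne : (Finset.univ.filter fun d => rel P a d).Nonempty := ⟨a, by simp [rel_refl hP]⟩
    have hm := Finset.max'_mem _ hne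
    set d := (Finset.univ.filter fun d => rel P a d).max' hne with hd
    simp only [Finset.mem_filter, Finset.mem_univ, true_and] at hm
    refine ⟨d, ?_, hm⟩
    by_contra hlt
    refine h d (not_le.1 hlt) (rel_symm hm) ((isBlockMax_iff d).2 fun e he => ?_)
    exact Finset.le_max' _ _ (by simpa using rel_trans hP hm he)

theorem rel_step {n : ℕ} {P Q : Finset (Finset (Fin n))} (hP : IsPartition P)
    (hQ : IsPartition Q) (hPN : IsNonCrossing P) (hQN : IsNonCrossing Q)
    (hmin : ∀ i, IsBlockMin P i ↔ IsBlockMin Q i) (hmax : ∀ i, IsBlockMax P i ↔ IsBlockMax Q i)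
    (j : Fin n) (ih : ∀ a b, a < j → b < j → (rel P a b ↔ rel Q a b))
    (i : Fin n) (hij : i < j) (h : rel P i j) : rel Q i j := by
  have hnm : ¬ IsBlockMin Q j := by
    rw [← hmin, isBlockMin_iff]
    intro hh
    exact absurd hij (not_lt.2 (hh i (rel_symm h)))
  rw [isBlockMin_iff] at hnm
  push Not at hnm
  obtain ⟨i0, hi0, hi0j⟩ := hnm
  have hop : ∀ a, a < j → ((∃ d, j ≤ d ∧ rel P a d) ↔ (∃ d, j ≤ d ∧ rel Q a d)) := by
    intro a ha
    rw [open_iff hP, open_iff hQ]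
    constructor
    · intro hh c hc hca
      rw [← hmax]
      exact hh c hc ((ih c a hc ha).2 hca)
    · intro hh c hc hca
      rw [hmax]
      exact hh c hc ((ih c a hc ha).1 hca)
  have hne : (Finset.univ.filter fun a => a < j ∧ ∃ d, j ≤ d ∧ rel P a d).Nonempty :=
    ⟨i, by simpa using ⟨hij, j, le_refl _, h⟩⟩
  have hm := Finset.max'_mem _ hne
  have hle := Finset.le_max' (Finset.univ.filter fun a => a < j ∧ ∃ d, j ≤ d ∧ rel P a d)
  set a := (Finset.univ.filter fun a => a < j ∧ ∃ d, j ≤ d ∧ rel P a d).max' hne with hd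
  simp only [Finset.mem_filter, Finset.mem_univ, true_and] at hm hle
  obtain ⟨haj, d, hjd, had⟩ := hm
  have key : ∀ {R : Finset (Finset (Fin n))}, IsPartition R → IsNonCrossing R →
      ∀ i d, i < j → i ≤ a → rel R i j → j ≤ d → rel R a d → rel R a j := by
    intro R hR hRN i d hij hia h hjd had
    rcases hjd.eq_or_lt with rfl | hjd
    · exact had
    rcases hia.eq_or_lt with rfl | hia
    · exact h
    exact rel_trans hR (rel_symm (nc_rel hRN hia haj hjd h had)) h
  have h1 : rel P a j := key hP hPN i d hij (hle i ⟨hij, j, le_refl _, h⟩ ) h hjd had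
  obtain ⟨d', hjd', had'⟩ := (hop a haj).1 ⟨d, hjd, had⟩
  have h2 : rel Q a j := key hQ hQN i0 d' hi0j
    (hle i0 ⟨hi0j, (hop i0 hi0j).2 ⟨j, le_refl _, rel_symm hi0⟩⟩) (rel_symm hi0) hjd' had'
  have h3 : rel P i a := rel_trans hP h (rel_symm h1)
  exact rel_trans hQ ((ih i a hij haj).1 h3) h2

theorem flags_inj {n : ℕ} {P Q : Finset (Finset (Fin n))} (hP : IsPartition P)
    (hQ : IsPartition Q) (hPN : IsNonCrossing P) (hQN : IsNonCrossing Q)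
    (hmin : ∀ i, IsBlockMin P i ↔ IsBlockMin Q i) (hmax : ∀ i, IsBlockMax P i ↔ IsBlockMax Q i) :
    P = Q := by
  have key : ∀ (m : ℕ) (a b : Fin n), a.1 < m → b.1 < m → (rel P a b ↔ rel Q a b) := by
    intro m
    induction m with
    | zero => intro a b h; omega
    | succ m ih =>
      have lt : ∀ a b : Fin n, a < b → b.1 < m + 1 → (rel P a b ↔ rel Q a b) := by
        intro a b hab hb
        have ih' : ∀ c d, c < b → d < b → (rel P c d ↔ rel Q c d) := fun c d hc hd =>
          ih c d (by have : c.1 < b.1 := hc; omega) (by have : d.1 < b.1 := hd; omega)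
        exact ⟨rel_step hP hQ hPN hQN hmin hmax b ih' a hab,
          rel_step hQ hP hQN hPN (fun i => (hmin i).symm) (fun i => (hmax i).symm) b
            (fun c d hc hd => (ih' c d hc hd).symm) a hab⟩
      intro a b ha hb
      rcases lt_trichotomy a b with h | h | h
      · exact lt a b h hb
      · subst h
        exact ⟨fun _ => rel_refl hQ a, fun _ => rel_refl hP a⟩
      · have := lt b a h ha
        exact ⟨fun h => rel_symm (this.1 (rel_symm h)), fun h => rel_symm (this.2 (rel_symm h))⟩
  exact partition_ext hP hQ (fun i j h => (key n i j i.2 j.2).1 h)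
    (fun i j h => (key n i j i.2 j.2).2 h)

/-- blocks open at time `k` -/
def opens {n : ℕ} (P : Finset (Finset (Fin n))) (k : ℕ) : Finset (Finset (Fin n)) :=
  P.filter fun t => (∃ i ∈ t, i.1 < k) ∧ ∃ j ∈ t, k ≤ j.1

theorem flags_mem_aux {n : ℕ} {P : Finset (Finset (Fin n))} (hP : IsPartition P) (r : ℕ) :
    ∀ k, k + r = n → ((List.finRange n).drop k).map (flag P) ∈ Val r (opens P k).card := by
  induction r with
  | zero =>
    intro k hk
    have h0 : opens P k = ∅ := by
      ext t
      simp only [opens, Finset.mem_filter, Finset.notMem_empty, iff_false]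
      rintro ⟨-, -, j, -, hj⟩
      have := j.2
      omega
    have h1 : (List.finRange n).drop k = [] := by
      rw [List.drop_eq_nil_iff]; simp; omega
    rw [h0, h1]
    simp [Val]
  | succ r ih =>
    intro k hk
    have hkn : k < n := by omega
    have h1 : (List.finRange n).drop k = ⟨k, hkn⟩ :: (List.finRange n).drop (k + 1) := by
      rw [List.drop_eq_getElem_cons (by simpa using hkn)]
      simp
    rw [h1, List.map_cons]
    have ihk := ih (k + 1) (by omega)
    set w := ((List.finRange n).drop (k + 1)).map (flag P)
    obtain ⟨t, ⟨htP, hkt⟩, htu⟩ := hP.2 ⟨k, hkn⟩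
    have hmin : IsBlockMin P ⟨k, hkn⟩ ↔ t ∉ opens P k := by
      simp only [opens, Finset.mem_filter, htP, true_and, not_and]
      constructor
      · intro h ⟨i, hi, hik⟩ _
        have := h t htP hkt i hi
        have : k ≤ i.1 := this
        omega
      · intro h u hu hku j hj
        have := htu u ⟨hu, hku⟩
        subst this
        by_contra hlt
        have hlt : j.1 < k := not_le.1 hlt
        exact h ⟨j, hj, hlt⟩ ⟨⟨k, hkn⟩, hku, le_refl _⟩
    have hmax : IsBlockMax P ⟨k, hkn⟩ ↔ t ∉ opens P (k + 1) := by
      simp only [opens, Finset.mem_filter, htP, true_and, not_and]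
      constructor
      · rintro h _ ⟨j, hj, hjk⟩
        have := h t htP hkt j hj
        have : j.1 ≤ k := this
        omega
      · intro h u hu hku j hj
        have := htu u ⟨hu, hku⟩
        subst this
        by_contra hlt
        have hlt : k < j.1 := not_le.1 hlt
        exact h ⟨⟨k, hkn⟩, hku, Nat.lt_succ_self k⟩ ⟨j, hj, hlt⟩
    have her : (opens P k).erase t = (opens P (k + 1)).erase t := by
      ext u
      simp only [opens, Finset.mem_erase, Finset.mem_filter]
      refine and_congr_right fun hut => and_congr_right fun hu => ?_
      have hne : ∀ j ∈ u, j.1 ≠ k := by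
        rintro j hj hjk
        apply hut
        apply htu u ⟨hu, ?_⟩
        have : j = ⟨k, hkn⟩ := Fin.ext hjk
        rwa [← this]
      constructor
      · rintro ⟨⟨i, hi, hik⟩, j, hj, hjk⟩
        have := hne j hj
        exact ⟨⟨i, hi, by omega⟩, j, hj, by omega⟩
      · rintro ⟨⟨i, hi, hik⟩, j, hj, hjk⟩
        have := hne i hi
        exact ⟨⟨i, hi, by omega⟩, j, hj, by omega⟩
    have hcard := congrArg Finset.card her
    have c1 : t ∈ opens P k → (opens P k).card = ((opens P k).erase t).card + 1 :=
      fun h => (Finset.card_erase_add_one h).symm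
    have c2 : t ∉ opens P k → (opens P k).card = ((opens P k).erase t).card :=
      fun h => by rw [Finset.erase_eq_of_notMem h]
    have c3 : t ∈ opens P (k+1) → (opens P (k+1)).card = ((opens P (k+1)).erase t).card + 1 :=
      fun h => (Finset.card_erase_add_one h).symm
    have c4 : t ∉ opens P (k+1) → (opens P (k+1)).card = ((opens P (k+1)).erase t).card :=
      fun h => by rw [Finset.erase_eq_of_notMem h]
    by_cases hm : t ∈ opens P k <;> by_cases hM : t ∈ opens P (k + 1)
    · have hf : flag P ⟨k, hkn⟩ = (false, false) := by simp [flag, hmin, hmax, hm, hM]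
      rw [hf, c1 hm, hcard]
      rw [c3 hM] at ihk
      simp [Val, ihk]
    · have hf : flag P ⟨k, hkn⟩ = (false, true) := by simp [flag, hmin, hmax, hm, hM]
      rw [hf, c1 hm, hcard]
      rw [c4 hM] at ihk
      simp [Val, ihk]
    · have hf : flag P ⟨k, hkn⟩ = (true, false) := by simp [flag, hmin, hmax, hm, hM]
      rw [hf, c2 hm, hcard]
      rw [c3 hM] at ihk
      generalize ((opens P (k + 1)).erase t).card = h at *
      cases h <;> simp [Val, ihk]
    · have hf : flag P ⟨k, hkn⟩ = (true, true) := by simp [flag, hmin, hmax, hm, hM]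
      rw [hf, c2 hm, hcard]
      rw [c4 hM] at ihk
      generalize ((opens P (k + 1)).erase t).card = h at *
      cases h <;> simp [Val, ihk]

theorem flags_mem {n : ℕ} {P : Finset (Finset (Fin n))} (hP : IsPartition P) :
    (List.finRange n).map (flag P) ∈ Val n 0 := by
  have := flags_mem_aux hP n 0 (by omega)
  have h0 : opens P 0 = ∅ := by
    ext t
    simp [opens]
  rw [h0] at this
  simpa using this

/-- invariants for the reconstruction of a partition -/
structure Inv (W : ℕ → Bool × Bool) (k : ℕ) (lab : ℕ → ℕ) (st : List ℕ) : Prop where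
  lt : ∀ i < k, lab i < k
  used : ∀ s ∈ st, ∃ i < k, lab i = s
  min : ∀ i < k, ((W i).1 = true ↔ ∀ j < i, lab j ≠ lab i)
  max : ∀ i < k, ((W i).2 = true ↔ (lab i ∉ st ∧ ∀ j, i < j → j < k → lab j ≠ lab i))
  nc : ∀ a b c d, a < b → b < c → c < d → d < k → lab a = lab c → lab b = lab d → lab a = lab b
  cov : ∀ a b c, a < b → b < c → c < k → lab b ∈ st → lab a = lab c → lab a = lab b
  pw : st.Pairwise (fun t s => t ≠ s ∧ ∀ a < k, ∀ b < k, lab a = t → lab b = s → b < a)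

theorem Inv.ext1 {W : ℕ → Bool × Bool} {k u : ℕ} {lab lab' : ℕ → ℕ} {st : List ℕ}
    (h : Inv W k lab st) (hk : ∀ i < k, lab' i = lab i) {st' : List ℕ}
    (hsub : ∀ s ∈ st', s ∈ st ∨ s = u)
    (hkk : lab' k = u) (hu : u ≤ k)
    (hnew : (∀ i < k, lab i ≠ u) ∨ (u ∈ st ∧ ∀ s ∈ st', s ≠ u → 
      ∀ a < k, ∀ b < k, lab a = u → lab b = s → b < a))
    (hmin : (W k).1 = true ↔ ∀ j < k, lab j ≠ u)
    (hmax : ∀ i < k + 1, ((W i).2 = true ↔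
      (lab' i ∉ st' ∧ ∀ j, i < j → j < k + 1 → lab' j ≠ lab' i)))
    (pw : st'.Pairwise (fun t s => t ≠ s ∧ ∀ a < k + 1, ∀ b < k + 1, lab' a = t → lab' b = s → b < a)) :
    Inv W (k + 1) lab' st' := by
  obtain ⟨lt, used, min, max, nc, cov, -⟩ := h
  refine ⟨?_, ?_, ?_, hmax, ?_, ?_, pw⟩
  · intro i hi
    rcases Nat.lt_succ_iff_lt_or_eq.1 hi with hi | hi
    · rw [hk i hi]; have := lt i hi; omega
    · rw [hi, hkk]; omega
  · intro s hs
    rcases hsub s hs with hs | hs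
    · obtain ⟨i, hi, e⟩ := used s hs
      exact ⟨i, by omega, by rw [hk i hi, e]⟩
    · exact ⟨k, by omega, by rw [hkk, hs]⟩
  · intro i hi
    rcases Nat.lt_succ_iff_lt_or_eq.1 hi with hi | hi
    · rw [min i hi, hk i hi]
      refine forall_congr' fun j => forall_congr' fun hj => ?_
      rw [hk j (by omega)]
    · rw [hi, hkk, hmin]
      refine forall_congr' fun j => forall_congr' fun hj => ?_
      rw [hk j (by omega)]
  · intro a b c d hab hbc hcd hd h1 h2
    rw [hk a (by omega), hk c (by omega)] at h1
    rw [hk a (by omega), hk b (by omega)]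
    rw [hk b (by omega)] at h2
    rcases Nat.lt_succ_iff_lt_or_eq.1 hd with hd | hd
    · rw [hk d hd] at h2
      exact nc a b c d hab hbc hcd hd h1 h2
    · rw [hd, hkk] at h2
      rcases hnew with hn | ⟨hn, -⟩
      · exact absurd h2 (hn b (by omega))
      · exact cov a b c hab hbc (by omega) (by rw [h2]; exact hn) h1
  · intro a b c hab hbc hc hb h1
    rw [hk b (by omega)] at hb
    rw [hk a (by omega)] at h1
    rw [hk a (by omega), hk b (by omega)]
    by_cases hbu : lab b = u
    · rcases hnew with hn | ⟨hn, hn2⟩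
      · exact absurd hbu (hn b (by omega))
      · rcases Nat.lt_succ_iff_lt_or_eq.1 hc with hc | hc
        · rw [hk c hc] at h1
          exact cov a b c hab hbc hc (by rw [hbu]; exact hn) h1
        · rw [hc, hkk] at h1
          rw [h1, hbu]
    have hb' : lab b ∈ st := by
      rcases hsub _ hb with h | h
      · exact h
      · exact absurd h hbu
    rcases Nat.lt_succ_iff_lt_or_eq.1 hc with hc | hc
    · rw [hk c hc] at h1
      exact cov a b c hab hbc hc hb' h1
    · rw [hc, hkk] at h1
      rcases hnew with hn | ⟨hn, hn2⟩
      · exact absurd h1 (hn a (by omega))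
      · have := hn2 _ hb hbu a (by omega) b (by omega) h1 rfl
        omega

theorem Inv.sing {W : ℕ → Bool × Bool} {k : ℕ} {lab : ℕ → ℕ} {st : List ℕ} (h : Inv W k lab st)
    (hW : W k = (true, true)) : Inv W (k + 1) (Function.update lab k k) st := by
  have hk : ∀ i < k, Function.update lab k k i = lab i := fun i hi =>
    Function.update_of_ne (by omega) _ _
  have hkk : Function.update lab k k k = k := Function.update_self _ _ _
  have hne : ∀ i < k, lab i ≠ k := fun i hi => (h.lt i hi).ne
  have hks : k ∉ st := fun hh => by obtain ⟨i, hi, e⟩ := h.used k hh; exact hne i hi e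
  generalize Function.update lab k k = lab' at hk hkk
  refine h.ext1 hk (u := k) (fun s hs => Or.inl hs) hkk le_rfl (Or.inl hne) (by simp [hW]; exact hne) ?_ ?_
  · intro i hi
    rcases Nat.lt_succ_iff_lt_or_eq.1 hi with hi | hi
    · rw [h.max i hi, hk i hi]
      refine and_congr_right fun _ => ⟨fun h2 j hj hjk => ?_, fun h2 j hj hjk => ?_⟩
      · rcases Nat.lt_succ_iff_lt_or_eq.1 hjk with hjk | hjk
        · rw [hk j hjk]; exact h2 j hj hjk
        · rw [hjk, hkk]; exact (hne i hi).symm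
      · have := h2 j hj (by omega)
        rwa [hk j hjk] at this
    · subst hi
      rw [hW, hkk]
      simp only [true_iff]
      exact ⟨hks, fun j hj hjk => by omega⟩
  · refine h.pw.imp_of_mem ?_
    rintro t s ht hs ⟨h1, h2⟩
    refine ⟨h1, fun a ha b hb e1 e2 => ?_⟩
    rcases Nat.lt_succ_iff_lt_or_eq.1 ha with ha | ha
    · rcases Nat.lt_succ_iff_lt_or_eq.1 hb with hb | hb
      · rw [hk a ha] at e1; rw [hk b hb] at e2; exact h2 a ha b hb e1 e2
      · rw [hb, hkk] at e2; exact absurd (e2 ▸ hs) hks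
    · rw [ha, hkk] at e1; exact absurd (e1 ▸ ht) hks

theorem Inv.opn {W : ℕ → Bool × Bool} {k : ℕ} {lab : ℕ → ℕ} {st : List ℕ} (h : Inv W k lab st)
    (hW : W k = (true, false)) : Inv W (k + 1) (Function.update lab k k) (k :: st) := by
  have hk : ∀ i < k, Function.update lab k k i = lab i := fun i hi =>
    Function.update_of_ne (by omega) _ _
  have hkk : Function.update lab k k k = k := Function.update_self _ _ _
  have hne : ∀ i < k, lab i ≠ k := fun i hi => (h.lt i hi).ne
  have hks : k ∉ st := fun hh => by obtain ⟨i, hi, e⟩ := h.used k hh; exact hne i hi e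
  generalize Function.update lab k k = lab' at hk hkk
  refine h.ext1 hk (u := k) (fun s hs => (List.mem_cons.1 hs).symm) hkk le_rfl (Or.inl hne)
    (by simp [hW]; exact hne) ?_ ?_
  · intro i hi
    rcases Nat.lt_succ_iff_lt_or_eq.1 hi with hi | hi
    · rw [h.max i hi, hk i hi, List.mem_cons, not_or]
      refine ⟨fun h1 => ⟨⟨hne i hi, h1.1⟩, fun j hj hjk => ?_⟩, fun h1 => ⟨h1.1.2, fun j hj hjk => ?_⟩⟩
      · rcases Nat.lt_succ_iff_lt_or_eq.1 hjk with hjk | hjk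
        · rw [hk j hjk]; exact h1.2 j hj hjk
        · rw [hjk, hkk]; exact (hne i hi).symm
      · have := h1.2 j hj (by omega)
        rwa [hk j hjk] at this
    · subst hi
      rw [hW, hkk]
      simp
  · rw [List.pairwise_cons]
    constructor
    · intro s hs
      refine ⟨fun e => hks (e ▸ hs), fun a ha b hb e1 e2 => ?_⟩
      rcases Nat.lt_succ_iff_lt_or_eq.1 ha with ha | ha
      · rw [hk a ha] at e1; exact absurd e1 (hne a ha)
      · rcases Nat.lt_succ_iff_lt_or_eq.1 hb with hb | hb
        · omega
        · rw [hb, hkk] at e2; exact absurd (e2 ▸ hs) hks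
    refine h.pw.imp_of_mem ?_
    rintro t s ht hs ⟨h1, h2⟩
    refine ⟨h1, fun a ha b hb e1 e2 => ?_⟩
    rcases Nat.lt_succ_iff_lt_or_eq.1 ha with ha | ha
    · rcases Nat.lt_succ_iff_lt_or_eq.1 hb with hb | hb
      · rw [hk a ha] at e1; rw [hk b hb] at e2; exact h2 a ha b hb e1 e2
      · rw [hb, hkk] at e2; exact absurd (e2 ▸ hs) hks
    · rw [ha, hkk] at e1; exact absurd (e1 ▸ ht) hks

theorem Inv.pw_aux {W : ℕ → Bool × Bool} {k t : ℕ} {lab lab' : ℕ → ℕ} {st : List ℕ}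
    (h : Inv W k lab (t :: st)) (hk : ∀ i < k, lab' i = lab i) (hkk : lab' k = t) :
    (t :: st).Pairwise (fun t s => t ≠ s ∧
      ∀ a < k + 1, ∀ b < k + 1, lab' a = t → lab' b = s → b < a) := by
  have pw := h.pw
  rw [List.pairwise_cons] at pw ⊢
  obtain ⟨pw1, pw⟩ := pw
  constructor
  · intro s hs
    obtain ⟨hts, h2⟩ := pw1 s hs
    refine ⟨hts, fun a ha b hb e1 e2 => ?_⟩
    rcases Nat.lt_succ_iff_lt_or_eq.1 hb with hb | hb
    · rcases Nat.lt_succ_iff_lt_or_eq.1 ha with ha | ha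
      · rw [hk a ha] at e1; rw [hk b hb] at e2; exact h2 a ha b hb e1 e2
      · omega
    · rw [hb, hkk] at e2; exact absurd e2 hts
  refine pw.imp_of_mem ?_
  rintro t' s ht hs ⟨h1, h2⟩
  refine ⟨h1, fun a ha b hb e1 e2 => ?_⟩
  rcases Nat.lt_succ_iff_lt_or_eq.1 ha with ha | ha
  · rcases Nat.lt_succ_iff_lt_or_eq.1 hb with hb | hb
    · rw [hk a ha] at e1; rw [hk b hb] at e2; exact h2 a ha b hb e1 e2
    · rw [hb, hkk] at e2; exact absurd e2 (pw1 s hs).1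
  · rw [ha, hkk] at e1; exact absurd e1 (pw1 t' ht).1

theorem Inv.mid {W : ℕ → Bool × Bool} {k t : ℕ} {lab : ℕ → ℕ} {st : List ℕ}
    (h : Inv W k lab (t :: st))
    (hW : W k = (false, false)) : Inv W (k + 1) (Function.update lab k t) (t :: st) := by
  have hk : ∀ i < k, Function.update lab k t i = lab i := fun i hi =>
    Function.update_of_ne (by omega) _ _
  have hkk : Function.update lab k t k = t := Function.update_self _ _ _
  obtain ⟨i0, hi0, ht0⟩ := h.used t (by simp)
  have pw1 := (List.pairwise_cons.1 h.pw).1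
  generalize Function.update lab k t = lab' at hk hkk
  refine h.ext1 hk (u := t) (fun s hs => Or.inl hs) hkk (by have := h.lt i0 hi0; omega)
    (Or.inr ⟨by simp, fun s hs hst => ?_⟩) ?_ ?_ (h.pw_aux hk hkk)
  · rcases List.mem_cons.1 hs with e | hs
    · exact absurd e hst
    · exact (pw1 s hs).2
  · rw [hW]
    simp only [Bool.false_eq_true, false_iff]
    intro hh
    exact hh i0 hi0 ht0
  · intro i hi
    rcases Nat.lt_succ_iff_lt_or_eq.1 hi with hi | hi
    · rw [h.max i hi, hk i hi]
      refine and_congr_right fun h1 => ⟨fun h2 j hj hjk => ?_, fun h2 j hj hjk => ?_⟩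
      · rcases Nat.lt_succ_iff_lt_or_eq.1 hjk with hjk | hjk
        · rw [hk j hjk]; exact h2 j hj hjk
        · rw [hjk, hkk]; intro e; exact h1 (by rw [← e]; simp)
      · have := h2 j hj (by omega)
        rwa [hk j hjk] at this
    · subst hi
      rw [hW, hkk]
      simp

theorem Inv.cls {W : ℕ → Bool × Bool} {k t : ℕ} {lab : ℕ → ℕ} {st : List ℕ}
    (h : Inv W k lab (t :: st))
    (hW : W k = (false, true)) : Inv W (k + 1) (Function.update lab k t) st := by
  have hk : ∀ i < k, Function.update lab k t i = lab i := fun i hi =>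
    Function.update_of_ne (by omega) _ _
  have hkk : Function.update lab k t k = t := Function.update_self _ _ _
  obtain ⟨i0, hi0, ht0⟩ := h.used t (by simp)
  have pw1 := (List.pairwise_cons.1 h.pw).1
  generalize Function.update lab k t = lab' at hk hkk
  refine h.ext1 hk (u := t) (fun s hs => Or.inl (List.mem_cons_of_mem _ hs)) hkk
    (by have := h.lt i0 hi0; omega)
    (Or.inr ⟨by simp, fun s hs _ => (pw1 s hs).2⟩) ?_ ?_ (List.pairwise_cons.1 (h.pw_aux hk hkk)).2
  · rw [hW]
    simp only [Bool.false_eq_true, false_iff]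
    intro hh
    exact hh i0 hi0 ht0
  · intro i hi
    rcases Nat.lt_succ_iff_lt_or_eq.1 hi with hi | hi
    · rw [h.max i hi, hk i hi, List.mem_cons, not_or]
      refine ⟨fun h1 => ⟨h1.1.2, fun j hj hjk => ?_⟩, fun h1 => ⟨⟨?_, h1.1⟩, fun j hj hjk => ?_⟩⟩
      · rcases Nat.lt_succ_iff_lt_or_eq.1 hjk with hjk | hjk
        · rw [hk j hjk]; exact h1.2 j hj hjk
        · rw [hjk, hkk]; exact fun e => h1.1.1 e.symm
      · have := h1.2 k hi (by omega)
        rw [hkk] at this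
        exact fun e => this e.symm
      · have := h1.2 j hj (by omega)
        rwa [hk j hjk] at this
    · subst hi
      rw [hW, hkk]
      simp only [true_iff]
      exact ⟨fun hh => (pw1 t hh).1 rfl, fun j hj hjk => by omega⟩

theorem Val_length : ∀ (n h : ℕ) (w : List (Bool × Bool)), w ∈ Val n h → w.length = n := by
  intro n
  induction n with
  | zero => intro h w hw; cases h <;> simp_all [Val]
  | succ n ih =>
    intro h w hw
    cases h <;> simp only [Val, Finset.mem_union, Finset.mem_image] at hw <;> grind

theorem Val_inv (W : ℕ → Bool × Bool) : ∀ (n h : ℕ) (w : List (Bool × Bool)), w ∈ Val n h →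
    ∀ k lab st, (∀ i (hi : i < w.length), W (k + i) = w[i]) → Inv W k lab st → st.length = h →
    ∃ lab', Inv W (k + n) lab' [] := by
  intro n
  induction n with
  | zero =>
    intro h w hw k lab st hW hI hl
    cases h with
    | zero =>
      have : st = [] := List.length_eq_zero_iff.1 hl
      subst this
      exact ⟨lab, hI⟩
    | succ h => simp [Val] at hw
  | succ n ih =>
    intro h w hw k lab st hW hI hl
    have hcons : ∀ f w', w = f :: w' → W k = f ∧ ∀ i (hi : i < w'.length), W (k + 1 + i) = w'[i] := by
      rintro f w' rfl
      refine ⟨hW 0 (by simp), fun i hi => ?_⟩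
      have := hW (i + 1) (by simpa using hi)
      rw [show k + 1 + i = k + (i + 1) by omega, this]
      simp
    have e : k + (n + 1) = k + 1 + n := by omega
    rw [e]
    cases h with
    | zero =>
      simp only [Val, Finset.mem_union, Finset.mem_image] at hw
      rcases hw with ⟨w', hw', rfl⟩ | ⟨w', hw', rfl⟩
      · obtain ⟨h1, h2⟩ := hcons _ _ rfl
        exact ih _ _ hw' _ _ _ h2 (hI.sing h1) hl
      · obtain ⟨h1, h2⟩ := hcons _ _ rfl
        exact ih _ _ hw' _ _ _ h2 (hI.opn h1) (by simp [hl])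
    | succ h =>
      cases st with
      | nil => simp at hl
      | cons t st =>
      simp only [Val, Finset.mem_union, Finset.mem_image] at hw
      rcases hw with (⟨w', hw', rfl⟩ | ⟨w', hw', rfl⟩) | (⟨w', hw', rfl⟩ | ⟨w', hw', rfl⟩)
      · obtain ⟨h1, h2⟩ := hcons _ _ rfl
        exact ih _ _ hw' _ _ _ h2 (hI.sing h1) hl
      · obtain ⟨h1, h2⟩ := hcons _ _ rfl
        exact ih _ _ hw' _ _ _ h2 (hI.opn h1) (by simpa using hl)
      · obtain ⟨h1, h2⟩ := hcons _ _ rfl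
        exact ih _ _ hw' _ _ _ h2 (hI.mid h1) hl
      · obtain ⟨h1, h2⟩ := hcons _ _ rfl
        exact ih _ _ hw' _ _ _ h2 (hI.cls h1) (by simpa using hl)

theorem Val_surj {n : ℕ} {w : List (Bool × Bool)} (hw : w ∈ Val n 0) :
    ∃ P ∈ NC n, (List.finRange n).map (flag P) = w := by
  have hlen := Val_length n 0 w hw
  obtain ⟨lab, hI⟩ := Val_inv (fun i => w.getD i (true, true)) n 0 w hw 0 id []
    (by intro i hi; simp [hi]) ⟨by simp, by simp, by simp, by simp, by simp, by simp, by simp⟩ rfl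
  rw [zero_add] at hI
  set P : Finset (Finset (Fin n)) :=
    Finset.univ.image fun i : Fin n => Finset.univ.filter fun j : Fin n => lab j = lab i with hPdef
  have hmem : ∀ t, t ∈ P ↔ ∃ i : Fin n, (Finset.univ.filter fun j : Fin n => lab j = lab i) = t := by
    intro t; simp [hPdef]
  have hP : IsPartition P := by
    constructor
    · intro t ht
      obtain ⟨i, rfl⟩ := (hmem t).1 ht
      exact ⟨i, by simp⟩
    · intro i
      refine ⟨Finset.univ.filter fun j : Fin n => lab j = lab i, ⟨(hmem _).2 ⟨i, rfl⟩, by simp⟩, ?_⟩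
      rintro u ⟨hu, hiu⟩
      obtain ⟨k, rfl⟩ := (hmem u).1 hu
      simp only [Finset.mem_filter, Finset.mem_univ, true_and] at hiu
      rw [hiu]
  have hrel : ∀ i j : Fin n, rel P i j ↔ lab i = lab j := by
    intro i j
    constructor
    · rintro ⟨t, ht, hi, hj⟩
      obtain ⟨k, rfl⟩ := (hmem t).1 ht
      simp only [Finset.mem_filter, Finset.mem_univ, true_and] at hi hj
      rw [hi, hj]
    · intro h
      exact ⟨_, (hmem _).2 ⟨i, rfl⟩, by simp, by simp [h]⟩
  refine ⟨P, ?_, ?_⟩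
  · simp only [NC, Finset.mem_filter, Finset.mem_univ, true_and]
    refine ⟨hP, ?_⟩
    intro a b c d hab hbc hcd t ht u hu ha hc hb hd
    have h1 := (hrel a c).1 ⟨t, ht, ha, hc⟩
    have h2 := (hrel b d).1 ⟨u, hu, hb, hd⟩
    obtain ⟨v, hv, h3, h4⟩ := (hrel a b).2 (hI.nc a b c d hab hbc hcd d.2 h1 h2)
    rw [(hP.2 a).unique ⟨ht, ha⟩ ⟨hv, h3⟩, (hP.2 b).unique ⟨hu, hb⟩ ⟨hv, h4⟩]
  · apply List.ext_getElem
    · simp [hlen]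
    · intro i h1 h2
      have hi : i < n := by omega
      have hmin := hI.min i hi
      have hmax := hI.max i hi
      simp only [List.getD_eq_getElem?_getD, List.getElem?_eq_getElem h2, Option.getD_some] at hmin hmax
      simp only [List.getElem_map, List.getElem_finRange, flag]
      have e1 : IsBlockMin P ⟨i, hi⟩ ↔ w[i].1 = true := by
        rw [hmin, isBlockMin_iff]
        constructor
        · intro h j hj he
          have := h ⟨j, by omega⟩ ((hrel _ _).2 he.symm)
          have : i ≤ j := this
          omega
        · intro h j hj
          by_contra hlt
          have hlt : j.1 < i := not_le.1 hlt
          exact h j hlt ((hrel _ _).1 hj).symm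
      have e2 : IsBlockMax P ⟨i, hi⟩ ↔ w[i].2 = true := by
        rw [hmax, isBlockMax_iff]
        constructor
        · intro h
          refine ⟨by simp, fun j hj hjn he => ?_⟩
          have := h ⟨j, hjn⟩ ((hrel _ _).2 he.symm)
          have : j ≤ i := this
          omega
        · intro h j hj
          by_contra hlt
          have hlt : i < j.1 := not_le.1 hlt
          exact h.2 j hlt j.2 ((hrel _ _).1 hj).symm
      ext <;> simp [e1, e2]

end Comb

section Machine2
variable {B M : Type*} [Ring B] [Algebra ℂ B] [Ring M] [Algebra ℂ M]

theorem sum_NC (κ : List M → B) (ι : B →ₐ[ℂ] M) {n : ℕ} (m : Fin n → M) :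
    ∑ P ∈ NC n, bracketing κ ι P m = TT κ ι ((List.finRange n).map m) ([], 1) := by
  rw [← sum_Val]
  simp only [List.length_map, List.length_finRange, List.length_nil]
  refine Finset.sum_bij (fun P _ => (List.finRange n).map (flag P)) ?_ ?_ ?_ ?_
  · intro P hP
    simp only [NC, Finset.mem_filter, Finset.mem_univ, true_and] at hP
    exact flags_mem hP.1
  · intro P hP Q hQ h
    simp only [NC, Finset.mem_filter, Finset.mem_univ, true_and] at hP hQ
    have h' : ∀ i, flag P i = flag Q i := by
      intro i
      have := List.map_inj_left.1 h i (List.mem_finRange i)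
      exact this
    refine flags_inj hP.1 hQ.1 hP.2 hQ.2 (fun i => ?_) (fun i => ?_)
    · have := congrArg Prod.fst (h' i)
      simpa [flag] using this
    · have := congrArg Prod.snd (h' i)
      simpa [flag] using this
  · intro w hw
    obtain ⟨P, hP, h⟩ := Val_surj hw
    exact ⟨P, hP, h⟩
  · intro P hP
    exact bracketing_eq κ ι P m

theorem E_prod_eq (ι : B →ₐ[ℂ] M) (E : M →ₗ[ℂ] B) (κ : MultiplicativeMap ι)
    (h : IsCumulantMap ι E κ) (hE1 : E 1 = 1) (l : List M) :
    TT κ.toFun ι l ([], 1) = E l.prod := by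
  rcases Nat.eq_zero_or_pos l.length with h0 | h0
  · have : l = [] := List.length_eq_zero_iff.1 h0
    subst this
    simp [TT, hE1]
  · have := h l.length l.get h0
    rw [sum_NC] at this
    simpa using this.symm

end Machine2
end OVFree
namespace OVFree

section Recur
variable {B M : Type*} [Ring B] [Algebra ℂ B] [Ring M] [Algebra ℂ M]

theorem TT_mul (κ : List M → B) (ι : B →ₐ[ℂ] M) (d : B) (l : List M) :
    ∀ st acc, TT κ ι l (st, d * acc) = d * TT κ ι l (st, acc) := by
  induction l with
  | nil => intro st acc; cases st <;> simp [TT]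
  | cons y l ih =>
    intro st acc
    rcases st with _ | ⟨us, _ | ⟨vs, st⟩⟩ <;> simp [TT, pushVal, mul_assoc, ih, mul_add]

theorem TT_add (κ : List M → B) (ι : B →ₐ[ℂ] M) (l : List M) :
    ∀ st acc acc', TT κ ι l (st, acc + acc') = TT κ ι l (st, acc) + TT κ ι l (st, acc') := by
  induction l with
  | nil => intro st acc acc'; cases st <;> simp [TT]
  | cons y l ih =>
    intro st acc acc'
    rcases st with _ | ⟨us, _ | ⟨vs, st⟩⟩ <;> simp [TT, pushVal, add_mul, ih] <;> abel

theorem TT_bot_add {ι : B →ₐ[ℂ] M} (κ : MultiplicativeMap ι) (l : List M) :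
    ∀ (st us1 : List _) (a a' : M) (us2 : List M) (acc : B),
      TT κ.toFun ι l (st ++ [us1 ++ (a + a') :: us2], acc) =
      TT κ.toFun ι l (st ++ [us1 ++ a :: us2], acc) +
      TT κ.toFun ι l (st ++ [us1 ++ a' :: us2], acc) := by
  induction l with
  | nil =>
    intro st us1 a a' us2 acc
    cases st <;> simp [TT]
  | cons y l ih =>
    intro st us1 a a' us2 acc
    have hP : ∀ (b : B) (st us1 : List _),
      TT κ.toFun ι l (pushVal ι b (st ++ [us1 ++ (a + a') :: us2], acc)) =
      TT κ.toFun ι l (pushVal ι b (st ++ [us1 ++ a :: us2], acc)) +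
      TT κ.toFun ι l (pushVal ι b (st ++ [us1 ++ a' :: us2], acc)) := by
      intro b st us1
      rcases st with _ | ⟨vs, st⟩
      · rcases us1 with _ | ⟨u, us1⟩
        · have := ih [] [] (a * ι b) (a' * ι b) us2 acc
          simpa [pushVal, closeArg, add_mul] using this
        · exact ih [] (u * ι b :: us1) a a' us2 acc
      · exact ih (closeArg ι b vs :: st) us1 a a' us2 acc
    rcases st with _ | ⟨vs, st⟩
    · have h1 := hP (κ.toFun [y]) [] us1
      have h2 := ih [[y]] us1 a a' us2 acc
      have h3 := ih [] (y :: us1) a a' us2 acc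
      have h4 : TT κ.toFun ι l (pushVal ι (κ.toFun (y :: (us1 ++ (a + a') :: us2)).reverse) ([], acc))
          = TT κ.toFun ι l (pushVal ι (κ.toFun (y :: (us1 ++ a :: us2)).reverse) ([], acc))
          + TT κ.toFun ι l (pushVal ι (κ.toFun (y :: (us1 ++ a' :: us2)).reverse) ([], acc)) := by
        have := κ.map_add us2.reverse a a' (us1.reverse ++ [y])
        simp only [pushVal]
        rw [← TT_add, ← mul_add]
        congr 3
        simpa using this
      simp only [List.nil_append, List.cons_append] at h1 h2 h3 h4 ⊢
      simp only [TT]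
      rw [h1, h2, h3, h4]
      abel
    · have h1 := hP (κ.toFun [y]) (vs :: st) us1
      have h2 := ih ([y] :: vs :: st) us1 a a' us2 acc
      have h3 := ih ((y :: vs) :: st) us1 a a' us2 acc
      have h4 := hP (κ.toFun (y :: vs).reverse) st us1
      simp only [List.cons_append] at h1 h2 h3 ⊢
      simp only [TT]
      rw [h1, h2, h3, h4]
      abel

/-- continuation of an open bracket -/
def SS (κ : List M → B) (ι : B →ₐ[ℂ] M) (us : List M) : List M → B
  | [] => 0
  | y :: q => TT κ ι q ([y :: us], 1) + TT κ ι q ([], κ (y :: us).reverse)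

theorem SS_cons (κ : List M → B) (ι : B →ₐ[ℂ] M) (us : List M) (y : M) (q : List M) :
    SS κ ι us (y :: q) = TT κ ι q ([y :: us], 1) + TT κ ι q ([], κ (y :: us).reverse) := rfl

theorem SS_add {ι : B →ₐ[ℂ] M} (κ : MultiplicativeMap ι) (a a' : M) (pre l : List M) :
    SS κ.toFun ι ((a + a') :: pre) l = SS κ.toFun ι (a :: pre) l + SS κ.toFun ι (a' :: pre) l := by
  cases l with
  | nil => simp [SS]
  | cons y q =>
    have h1 := TT_bot_add κ q [] [y] a a' pre 1
    have h2 := κ.map_add pre.reverse a a' [y]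
    simp only [List.nil_append, List.cons_append] at h1
    have h3 : κ.toFun (y :: (a + a') :: pre).reverse = κ.toFun (y :: a :: pre).reverse
        + κ.toFun (y :: a' :: pre).reverse := by simpa using h2
    simp only [SS]
    rw [h1, h3, TT_add]
    abel

theorem SS_zero {ι : B →ₐ[ℂ] M} (κ : MultiplicativeMap ι) (pre l : List M) :
    SS κ.toFun ι (0 :: pre) l = 0 := by
  have := SS_add κ 0 0 pre l
  rw [add_zero] at this
  simpa using this

theorem TT_split {ι : B →ₐ[ℂ] M} (κ : MultiplicativeMap ι) (x : M) (pre : List M) (l : List M) :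
    ∀ (st : List (List M)) (c : B),
      TT κ.toFun ι l (st ++ [x * ι c :: pre], 1) =
      ∑ k ∈ Finset.range (l.length + 1),
        SS κ.toFun ι (x * ι (TT κ.toFun ι (l.take k) (st, c)) :: pre) (l.drop k) := by
  induction l with
  | nil =>
    intro st c
    cases st <;> simp [TT, SS]
  | cons y l ih =>
    have hP : ∀ (b : B) (st : List (List M)) (c : B),
      TT κ.toFun ι l (pushVal ι b (st ++ [x * ι c :: pre], 1)) =
      ∑ k ∈ Finset.range (l.length + 1),
        SS κ.toFun ι (x * ι (TT κ.toFun ι (l.take k) (pushVal ι b (st, c))) :: pre) (l.drop k) := by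
      intro b st c
      rcases st with _ | ⟨vs, st⟩
      · have := ih [] (c * b)
        simpa [pushVal, closeArg, mul_assoc] using this
      · exact ih (closeArg ι b vs :: st) c
    intro st c
    rw [List.length_cons, Finset.sum_range_succ']
    simp only [List.take_succ_cons, List.drop_succ_cons, List.take_zero, List.drop_zero]
    rcases st with _ | ⟨vs, st⟩
    · have h1 := hP (κ.toFun [y]) [] c
      have h2 := ih [[y]] c
      simp only [List.nil_append, List.cons_append] at h1 h2 ⊢
      simp only [TT, map_add, mul_add, SS_add, Finset.sum_add_distrib]
      rw [h1, h2, SS_cons]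
      simp [pushVal]
    · have h1 := hP (κ.toFun [y]) (vs :: st) c
      have h2 := ih ([y] :: vs :: st) c
      have h3 := ih ((y :: vs) :: st) c
      have h4 := hP (κ.toFun (y :: vs).reverse) st c
      simp only [List.cons_append] at h1 h2 h3 ⊢
      simp only [TT, map_add, mul_add, SS_add, Finset.sum_add_distrib, map_zero, mul_zero, SS_zero]
      rw [h1, h2, h3, h4]
      simp

/-- gap recursion -/
def GG (κ : List M → B) (ι : B →ₐ[ℂ] M) (E : M → B) : List M → List M → M → M → B
  | [], P, x, g => κ (P ++ [x * ι (E g)])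
  | y :: q, P, x, g => GG κ ι E q (P ++ [x * ι (E g)]) y 1 + GG κ ι E q P x (g * y)

theorem GG_eq (κ : List M → B) (ι : B →ₐ[ℂ] M) (E : M → B) (l : List M) : ∀ P x g,
    GG κ ι E l P x g = κ (P ++ [x * ι (E (g * l.prod))]) +
      ∑ k ∈ Finset.range l.length, (match l.drop k with
        | [] => 0
        | y :: q => GG κ ι E q (P ++ [x * ι (E (g * (l.take k).prod))]) y 1) := by
  induction l with
  | nil => intro P x g; simp [GG]
  | cons y l ih =>
    intro P x g
    rw [GG, ih P x (g * y), List.length_cons, Finset.sum_range_succ']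
    simp only [List.take_succ_cons, List.drop_succ_cons, List.take_zero, List.drop_zero,
      List.prod_cons, List.prod_nil, mul_one, mul_assoc]
    rw [add_comm, add_assoc]

theorem Gd_eq {ι : B →ₐ[ℂ] M} (E : M →ₗ[ℂ] B) (κ : MultiplicativeMap ι)
    (h : IsCumulantMap ι E κ) (hE1 : E 1 = 1) (n : ℕ) : ∀ (l : List M), l.length ≤ n →
    ∀ (P : List M) (x : M), κ.toFun (P ++ [x]) * E l.prod + TT κ.toFun ι l ([x :: P.reverse], 1)
      = GG κ.toFun ι E l P x 1 := by
  induction n with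
  | zero =>
    intro l hl P x
    have : l = [] := List.length_eq_zero_iff.1 (by omega)
    subst this
    simp [GG, TT, hE1]
  | succ n ih =>
    intro l hl P x
    rw [GG_eq, one_mul, κ.B_right]
    congr 1
    have h1 := TT_split κ x P.reverse l [] 1
    rw [map_one, mul_one, List.nil_append] at h1
    rw [h1, Finset.sum_range_succ]
    rw [List.drop_length]
    simp only [SS, add_zero]
    refine Finset.sum_congr rfl fun k hk => ?_
    rw [E_prod_eq ι E κ h hE1, one_mul]
    have hlen : (l.drop k).length ≤ n + 1 := by simp; omega
    cases hd : l.drop k with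
    | nil => simp [SS]
    | cons y q =>
      have hq : q.length ≤ n := by rw [hd] at hlen; simpa using hlen
      have := ih q hq (P ++ [x * ι (E (l.take k).prod)]) y
      simp only [SS]
      rw [← this, add_comm]
      congr 1
      · rw [← E_prod_eq ι E κ h hE1 q, ← TT_mul, mul_one]
        simp
      · simp

theorem F1 {ι : B →ₐ[ℂ] M} (E : M →ₗ[ℂ] B) (κ : MultiplicativeMap ι)
    (h : IsCumulantMap ι E κ) (hE1 : E 1 = 1) (x : M) (l : List M) :
    E (x * l.prod) = GG κ.toFun ι E l [] x 1 := by
  rw [← Gd_eq E κ h hE1 l.length l le_rfl, ← List.prod_cons, ← E_prod_eq ι E κ h hE1 (x :: l),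
    TT, ← E_prod_eq ι E κ h hE1 l, ← TT_mul]
  simp [pushVal]

end Recur
end OVFree
namespace OVFree

/-- the data of the theorem, bundled -/
structure Ctx (B M : Type*) [Ring B] [Algebra ℂ B] [Ring M] [Algebra ℂ M] where
  ι : B →ₐ[ℂ] M
  E : M →ₗ[ℂ] B
  hE : IsCondExp ι E
  D : Subalgebra ℂ B
  F : B →ₗ[ℂ] B
  hFD : ∀ b, F b ∈ D
  hFid : ∀ d ∈ D, F d = d
  hFbimod : ∀ d ∈ D, ∀ d' ∈ D, ∀ b : B, F (d * b * d') = d * F b * d'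
  hFfaithful : ∀ b₁ : B, (∀ b₂ : B, F (b₁ * b₂) = 0) → b₁ = 0
  ED : M →ₗ[ℂ] ↥D
  hED : ∀ m : M, (ED m : B) = F (E m)
  κ : MultiplicativeMap ι
  hκ : IsCumulantMap ι E κ
  κD : MultiplicativeMap (ι.comp D.val)
  hκD : IsCumulantMap (ι.comp D.val) ED κD
  N : ℕ
  X : Fin N → M

namespace Ctx

variable {B M : Type*} [Ring B] [Algebra ℂ B] [Ring M] [Algebra ℂ M] (C : Ctx B M)

theorem E_left (b : B) (m : M) : C.E (C.ι b * m) = b * C.E m := by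
  have := C.hE.2 b 1 m
  simpa using this

theorem E_right (m : M) (b : B) : C.E (m * C.ι b) = C.E m * b := by
  have := C.hE.2 1 b m
  simpa using this

theorem E_one : C.E 1 = 1 := C.hE.1

theorem E_ι (b : B) : C.E (C.ι b) = b := by
  have := C.E_left b 1
  simpa [C.E_one] using this

theorem F_left {d : B} (hd : d ∈ C.D) (b : B) : C.F (d * b) = d * C.F b := by
  have := C.hFbimod d hd 1 C.D.one_mem b
  simpa using this

theorem F_right {d : B} (hd : d ∈ C.D) (b : B) : C.F (b * d) = C.F b * d := by
  have := C.hFbimod 1 C.D.one_mem d hd b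
  simpa using this

theorem ED_one : C.ED 1 = 1 := by
  apply Subtype.ext
  rw [C.hED, C.E_one, C.hFid 1 C.D.one_mem]
  rfl

/-- state functions, additive in the gap and in each stored coefficient -/
def FF : AddSubgroup (List (Fin C.N × B) → Fin C.N → M → B) where
  carrier := {f | (∀ P x g g', f P x (g + g') = f P x g + f P x g') ∧
    ∀ P1 i b b' P2 x g, f (P1 ++ (i, b + b') :: P2) x g
      = f (P1 ++ (i, b) :: P2) x g + f (P1 ++ (i, b') :: P2) x g}
  add_mem' := by
    rintro f f' ⟨h1, h2⟩ ⟨h1', h2'⟩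
    refine ⟨fun P x g g' => ?_, fun P1 i b b' P2 x g => ?_⟩
    · simp only [Pi.add_apply, h1, h1']; abel
    · simp only [Pi.add_apply, h2, h2']; abel
  zero_mem' := by
    refine ⟨fun P x g g' => ?_, fun P1 i b b' P2 x g => ?_⟩ <;> simp
  neg_mem' := by
    rintro f ⟨h1, h2⟩
    refine ⟨fun P x g g' => ?_, fun P1 i b b' P2 x g => ?_⟩
    · simp only [Pi.neg_apply, h1]; abel
    · simp only [Pi.neg_apply, h2]; abel

theorem FF_gap (f : C.FF) (P x) (g g' : M) : f.1 P x (g + g') = f.1 P x g + f.1 P x g' :=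
  f.2.1 P x g g'

theorem FF_gap_zero (f : C.FF) (P x) : f.1 P x 0 = 0 := by
  have := C.FF_gap f P x 0 0
  simpa using this

theorem FF_ent (f : C.FF) (P1 i b b' P2 x) (g : M) : f.1 (P1 ++ (i, b + b') :: P2) x g
      = f.1 (P1 ++ (i, b) :: P2) x g + f.1 (P1 ++ (i, b') :: P2) x g :=
  f.2.2 P1 i b b' P2 x g

/-- hat operator of a variable -/
def hatX (i : Fin C.N) : AddMonoid.End C.FF where
  toFun f := ⟨fun P x g => f.1 (P ++ [(x, C.E g)]) i 1 + f.1 P x (g * C.X i), by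
    refine ⟨fun P x g g' => ?_, fun P1 j b b' P2 x g => ?_⟩
    · simp only [map_add, add_mul, C.FF_gap, C.FF_ent]; abel
    · have := C.FF_ent f P1 j b b' (P2 ++ [(x, C.E g)]) i 1
      simp only [List.append_assoc, List.cons_append, this, C.FF_ent]
      abel⟩
  map_zero' := by
    apply Subtype.ext; funext P x g; simp
  map_add' f f' := by
    apply Subtype.ext; funext P x g; simp; abel

/-- hat operator of a coefficient -/
def hatB : B →+* AddMonoid.End C.FF where
  toFun b :=
    { toFun := fun f => ⟨fun P x g => f.1 P x (g * C.ι b), by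
        refine ⟨fun P x g g' => ?_, fun P1 j b b' P2 x g => ?_⟩
        · simp only [add_mul, C.FF_gap]
        · simp only [C.FF_ent]⟩
      map_zero' := by
        apply Subtype.ext; funext P x g; simp
      map_add' := fun f f' => by
        apply Subtype.ext; funext P x g; simp }
  map_one' := by
    ext f P x g
    show f.1 P x (g * C.ι 1) = f.1 P x g
    rw [map_one, mul_one]
  map_mul' b c := by
    ext f P x g
    show f.1 P x (g * C.ι (b * c)) = f.1 P x (g * C.ι b * C.ι c)
    rw [map_mul, mul_assoc]
  map_zero' := by
    ext f P x g
    show f.1 P x (g * C.ι 0) = 0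
    rw [map_zero, mul_zero, FF_gap_zero]
  map_add' b c := by
    ext f P x g
    show f.1 P x (g * C.ι (b + c)) = f.1 P x (g * C.ι b) + f.1 P x (g * C.ι c)
    rw [map_add, mul_add, FF_gap]

/-- the pair ring -/
abbrev RR := M × AddMonoid.End C.FF

def gX (i : Fin C.N) : C.RR := (C.X i, C.hatX i)

def gB : B →+* C.RR := (C.ι : B →+* M).prod C.hatB

/-- evaluation of an operator on a function at a state -/
def ev (r : C.RR) (f : C.FF) : List (Fin C.N × B) → Fin C.N → M → B := (r.2 f).1

theorem ev_gX (i) (r : C.RR) (f) (P x g) : C.ev (C.gX i * r) f P x g =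
    C.ev r f (P ++ [(x, C.E g)]) i 1 + C.ev r f P x (g * C.X i) := rfl

theorem ev_gB (b) (r : C.RR) (f) (P x g) : C.ev (C.gB b * r) f P x g =
    C.ev r f P x (g * C.ι b) := rfl

theorem ev_gB' (b) (f) (P x g) : C.ev (C.gB b) f P x g = f.1 P x (g * C.ι b) := rfl

theorem ev_one (f) (P x g) : C.ev 1 f P x g = f.1 P x g := rfl

theorem ev_mul (r s : C.RR) (f) (P x g) : C.ev (r * s) f P x g = C.ev r (s.2 f) P x g := rfl

theorem ev_gap (r : C.RR) (f) (P x g g') : C.ev r f P x (g + g') = C.ev r f P x g + C.ev r f P x g' :=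
  C.FF_gap _ _ _ _ _

theorem ev_add (r s : C.RR) (f) (P x g) : C.ev (r + s) f P x g = C.ev r f P x g + C.ev s f P x g := rfl

theorem ev_zero (f) (P x g) : C.ev 0 f P x g = 0 := rfl

theorem ev_neg (r : C.RR) (f) (P x g) : C.ev (-r) f P x g = - C.ev r f P x g := rfl

theorem ev_fsub (r : C.RR) (f f' : C.FF) (P x g) :
    C.ev r (f - f') P x g = C.ev r f P x g - C.ev r f' P x g := by
  simp [ev, map_sub]

theorem gX_fst (i) : (C.gX i).1 = C.X i := rfl
theorem gB_fst (b) : (C.gB b).1 = C.ι b := rfl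

/-- words with coefficients in `S` -/
def W (S : Subring B) : Subring C.RR := Subring.closure (Set.range C.gX ∪ C.gB '' S)

theorem gX_mem (S : Subring B) (i) : C.gX i ∈ C.W S :=
  Subring.subset_closure (Or.inl ⟨i, rfl⟩)

theorem gB_mem {S : Subring B} {b} (hb : b ∈ S) : C.gB b ∈ C.W S :=
  Subring.subset_closure (Or.inr ⟨b, hb, rfl⟩)

theorem W_mono {S T : Subring B} (h : S ≤ T) : C.W S ≤ C.W T :=
  Subring.closure_mono (Set.union_subset_union_right _ (Set.image_mono h))

/-- monomials -/
def mon (lw : List (Fin C.N × B)) : C.RR := (lw.map fun p => C.gX p.1 * C.gB p.2).prod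

theorem mon_nil : C.mon [] = 1 := rfl

theorem mon_cons (p lw) : C.mon (p :: lw) = C.gX p.1 * (C.gB p.2 * C.mon lw) := by
  simp [mon, mul_assoc]

theorem mon_fst (lw) : (C.mon lw).1 = (lw.map fun p => C.X p.1 * C.ι p.2).prod := by
  induction lw with
  | nil => rfl
  | cons p lw ih => rw [mon_cons, Prod.fst_mul, Prod.fst_mul, ih]; simp [mul_assoc, gX_fst, gB_fst]

theorem W_induction (S : Subring B) {p : C.RR → Prop} (h0 : p 0)
    (hadd : ∀ r s, p r → p s → p (r + s)) (hneg : ∀ r, p r → p (-r))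
    (hmon : ∀ b0 ∈ S, ∀ lw : List (Fin C.N × B), (∀ q ∈ lw, q.2 ∈ S) → p (C.gB b0 * C.mon lw)) :
    ∀ r ∈ C.W S, p r := by
  intro r hr
  rw [W, Subring.mem_closure_iff] at hr
  have key : ∀ m ∈ Submonoid.closure (Set.range C.gX ∪ C.gB '' S),
      ∃ b0 ∈ S, ∃ lw : List (Fin C.N × B), (∀ q ∈ lw, q.2 ∈ S) ∧ m = C.gB b0 * C.mon lw := by
    intro m hm
    induction hm using Submonoid.closure_induction_left with
    | one => exact ⟨1, S.one_mem, [], by simp, by simp [mon_nil]⟩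
    | mul_left x hx y hy ih =>
      obtain ⟨b0, hb0, lw, hlw, rfl⟩ := ih
      rcases hx with ⟨i, rfl⟩ | ⟨b, hb, rfl⟩
      · refine ⟨1, S.one_mem, (i, b0) :: lw, ?_, ?_⟩
        · intro q hq
          rcases List.mem_cons.1 hq with rfl | hq
          · exact hb0
          · exact hlw q hq
        · rw [mon_cons, map_one, one_mul]
      · exact ⟨b * b0, S.mul_mem hb hb0, lw, hlw, by rw [map_mul, mul_assoc]⟩
  induction hr using AddSubgroup.closure_induction with
  | mem x hx =>
    obtain ⟨b0, hb0, lw, hlw, rfl⟩ := key x hx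
    exact hmon b0 hb0 lw hlw
  | zero => exact h0
  | add x y _ _ hx hy => exact hadd x y hx hy
  | neg x _ hx => exact hneg x hx

theorem mon_mem (S : Subring B) (lw : List (Fin C.N × B)) (h : ∀ q ∈ lw, q.2 ∈ S) :
    C.mon lw ∈ C.W S := by
  induction lw with
  | nil => exact Subring.one_mem _
  | cons p lw ih =>
    rw [mon_cons]
    exact mul_mem (C.gX_mem S _) (mul_mem (C.gB_mem (h p (by simp)))
      (ih fun q hq => h q (List.mem_cons_of_mem _ hq)))

/-- the algebra generated by the variables and `D` -/
def A : Subalgebra ℂ M := Algebra.adjoin ℂ (Set.range C.X ∪ (C.ι '' (C.D : Set B)))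

/-- `D` as a subring -/
abbrev DS : Subring B := C.D.toSubring

theorem X_mem_A (i) : C.X i ∈ C.A := Algebra.subset_adjoin (Or.inl ⟨i, rfl⟩)
theorem ι_mem_A {d} (hd : d ∈ C.D) : C.ι d ∈ C.A := Algebra.subset_adjoin (Or.inr ⟨d, hd, rfl⟩)

theorem fst_mem_A {r : C.RR} (hr : r ∈ C.W C.DS) : r.1 ∈ C.A := by
  have : C.W C.DS ≤ C.A.toSubring.comap (RingHom.fst M (AddMonoid.End C.FF)) := by
    rw [W, Subring.closure_le]
    rintro _ (⟨i, rfl⟩ | ⟨d, hd, rfl⟩)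
    · exact C.X_mem_A i
    · exact C.ι_mem_A hd
  exact this hr

theorem lift_A {a : M} (ha : a ∈ C.A) : ∃ r ∈ C.W C.DS, r.1 = a := by
  induction ha using Algebra.adjoin_induction with
  | mem x hx =>
    rcases hx with ⟨i, rfl⟩ | ⟨d, hd, rfl⟩
    · exact ⟨_, C.gX_mem _ i, rfl⟩
    · exact ⟨_, C.gB_mem hd, rfl⟩
  | algebraMap c =>
    refine ⟨C.gB (algebraMap ℂ B c), C.gB_mem (C.D.algebraMap_mem c), ?_⟩
    rw [gB_fst, AlgHom.commutes]
  | add x y _ _ hx hy =>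
    obtain ⟨r, hr, rfl⟩ := hx
    obtain ⟨s, hs, rfl⟩ := hy
    exact ⟨r + s, add_mem hr hs, rfl⟩
  | mul x y _ _ hx hy =>
    obtain ⟨r, hr, rfl⟩ := hx
    obtain ⟨s, hs, rfl⟩ := hy
    exact ⟨r * s, mul_mem hr hs, rfl⟩

/-- argument list -/
def arg (P : List (Fin C.N × B)) : List M := P.map fun p => C.X p.1 * C.ι p.2

/-- argument list with `F` applied -/
def argF (P : List (Fin C.N × B)) : List M := P.map fun p => C.X p.1 * C.ι (C.F p.2)

def fend : C.FF := ⟨fun P x g => C.κ.toFun (C.arg P ++ [C.X x]) * C.E g, by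
  refine ⟨fun P x g g' => ?_, fun P1 j b b' P2 x g => ?_⟩
  · simp only [map_add, mul_add]
  · rw [← add_mul]
    have := C.κ.map_add (C.arg P1) (C.X j * C.ι b) (C.X j * C.ι b') (C.arg P2 ++ [C.X x])
    rw [← mul_add, ← map_add] at this
    simp only [arg, List.map_append, List.map_cons, List.append_assoc, List.cons_append] at this ⊢
    rw [this]⟩

def fend' : C.FF := ⟨fun P x g => (C.κD.toFun (C.argF P ++ [C.X x]) : B) * C.E g, by
  refine ⟨fun P x g g' => ?_, fun P1 j b b' P2 x g => ?_⟩
  · simp only [map_add, mul_add]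
  · rw [← add_mul]
    have := C.κD.map_add (C.argF P1) (C.X j * C.ι (C.F b)) (C.X j * C.ι (C.F b'))
      (C.argF P2 ++ [C.X x])
    rw [← mul_add, ← map_add, ← map_add] at this
    simp only [argF, List.map_append, List.map_cons, List.append_assoc, List.cons_append] at this ⊢
    rw [this]
    rfl⟩

theorem fend_apply (P x g) : C.fend.1 P x g = C.κ.toFun (C.arg P ++ [C.X x]) * C.E g := rfl
theorem fend'_apply (P x g) :
    C.fend'.1 P x g = (C.κD.toFun (C.argF P ++ [C.X x]) : B) * C.E g := rfl

theorem GG_ev (lw : List (Fin C.N × B)) : ∀ (P : List (Fin C.N × B)) x b g,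
    GG C.κ.toFun C.ι C.E (lw.map fun p => C.X p.1 * C.ι p.2) (C.arg P) (C.X x * C.ι b) g
      = C.ev (C.mon lw) C.fend P x (C.ι b * g) := by
  induction lw with
  | nil =>
    intro P x b g
    rw [List.map_nil, GG, mon_nil, ev_one, fend_apply, mul_assoc, ← map_mul, C.κ.B_right, C.E_left]
  | cons p lw ih =>
    intro P x b g
    have h1 := ih P x b (g * (C.X p.1 * C.ι p.2))
    have h2 := ih (P ++ [(x, C.E (C.ι b * g))]) p.1 p.2 1
    rw [mul_one] at h2
    rw [List.map_cons, GG, mon_cons, ev_gX, ev_gB, ev_gB, one_mul, h1, ← h2]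
    simp only [arg, List.map_append, List.map_cons, List.map_nil, C.E_left, map_mul, mul_assoc, mul_one]

theorem F1' {r : C.RR} (hr : r ∈ C.W ⊤) (x) : C.E (C.X x * r.1) = C.ev r C.fend [] x 1 := by
  revert r
  apply C.W_induction
  · simp [ev_zero]
  · intro r s hr hs
    rw [Prod.fst_add, mul_add, map_add, hr, hs, ev_add]
  · intro r hr
    rw [Prod.fst_neg, mul_neg, map_neg, hr, ev_neg]
  · intro b0 _ lw _
    have := F1 C.E C.κ C.hκ C.E_one (C.X x * C.ι b0) (lw.map fun p => C.X p.1 * C.ι p.2)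
    rw [ev_gB, Prod.fst_mul, gB_fst, mon_fst, ← mul_assoc, this]
    have h2 := C.GG_ev lw [] x b0 1
    rw [mul_one] at h2
    rw [one_mul, ← h2]
    rfl

theorem GG_evD (hA : ∀ a ∈ C.A, C.E a ∈ C.D) (b : B) (lw : List (Fin C.N × B))
    (hlw : ∀ q ∈ lw, q.2 ∈ C.D) : ∀ (P : List (Fin C.N × B)) x d g, d ∈ C.D → g ∈ C.A →
    ((GG C.κD.toFun (C.ι.comp C.D.val) C.ED (lw.map fun p => C.X p.1 * C.ι p.2) (C.argF P)
      (C.X x * C.ι d) g : C.D) : B) * b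
      = C.ev (C.mon lw * C.gB b) C.fend' P x (C.ι d * g) := by
  induction lw with
  | nil =>
    intro P x d g hd hg
    rw [List.map_nil, GG, mon_nil, one_mul, ev_gB', fend'_apply, mul_assoc, C.E_right, C.E_left]
    have h2 : C.ι d * (C.ι.comp C.D.val) (C.ED g) = (C.ι.comp C.D.val) (⟨d, hd⟩ * C.ED g) := by
      rw [map_mul]; rfl
    rw [h2, C.κD.B_right]
    have h1 : (C.ED g : B) = C.E g := by rw [C.hED, C.hFid _ (hA g hg)]
    simp only [MulMemClass.coe_mul, h1, mul_assoc]
  | cons p lw ih =>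
    intro P x d g hd hg
    have hp : p.2 ∈ C.D := hlw p (by simp)
    have ih := ih fun q hq => hlw q (List.mem_cons_of_mem _ hq)
    have e1 := ih P x d (g * (C.X p.1 * C.ι p.2)) hd
      (mul_mem hg (mul_mem (C.X_mem_A _) (C.ι_mem_A hp)))
    have e2 := ih (P ++ [(x, C.E (C.ι d * g))]) p.1 p.2 1 hp C.A.one_mem
    rw [mul_one] at e2
    rw [List.map_cons, GG, mon_cons, mul_assoc (C.gX p.1), mul_assoc (C.gB p.2), ev_gX, ev_gB, ev_gB,
      one_mul, mul_assoc (C.ι d), mul_assoc (C.ι d), mul_assoc g,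
      AddMemClass.coe_add, add_mul, e1, ← e2]
    have h2 : C.ι d * (C.ι.comp C.D.val) (C.ED g) = C.ι (C.F (C.E (C.ι d * g))) := by
      rw [C.E_left, C.F_left hd, map_mul, ← C.hED]; rfl
    rw [mul_assoc (C.X x), h2]
    simp only [argF, List.map_append, List.map_cons, List.map_nil, mul_one, mul_assoc]

end Ctx
end OVFree
namespace OVFree
namespace Ctx

variable {B M : Type*} [Ring B] [Algebra ℂ B] [Ring M] [Algebra ℂ M] (C : Ctx B M)

theorem mult_zero {B M : Type*} [Ring B] [Algebra ℂ B] [Ring M] [Algebra ℂ M] {ι : B →ₐ[ℂ] M}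
    (κ : MultiplicativeMap ι) (pre post : List M) : κ.toFun (pre ++ 0 :: post) = 0 := by
  have := κ.map_add pre 0 0 post
  rw [add_zero] at this
  simpa using this

/-- vanishing on dead states -/
def V (f : C.FF) : Prop := ∀ P x g, (∃ p ∈ P, C.F p.2 = 0) → f.1 P x g = 0

theorem V_ev {f : C.FF} (hf : C.V f) {r : C.RR} (hr : r ∈ C.W ⊤) : C.V (r.2 f) := by
  rw [W] at hr
  induction hr using Subring.closure_induction generalizing f with
  | mem r hr =>
    rcases hr with ⟨i, rfl⟩ | ⟨b, -, rfl⟩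
    · intro P x g hP
      have h1 : ∃ p ∈ P ++ [(x, C.E g)], C.F p.2 = 0 := by
        obtain ⟨p, hp, h⟩ := hP
        exact ⟨p, by simp [hp], h⟩
      show f.1 (P ++ [(x, C.E g)]) i 1 + f.1 P x (g * C.X i) = 0
      rw [hf _ _ _ h1, hf _ _ _ hP, add_zero]
    · intro P x g hP
      exact hf _ _ _ hP
  | zero => intro P x g hP; rfl
  | one => exact hf
  | add r s _ _ hr hs =>
    intro P x g hP
    show (r.2 f).1 P x g + (s.2 f).1 P x g = 0
    rw [hr hf P x g hP, hs hf P x g hP, add_zero]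
  | neg r _ hr =>
    intro P x g hP
    show - (r.2 f).1 P x g = 0
    rw [hr hf P x g hP, neg_zero]
  | mul r s _ _ hr hs => exact hr (hs hf)

theorem argF_dead {P : List (Fin C.N × B)} (h : ∃ p ∈ P, C.F p.2 = 0) :
    ∃ pre post, C.argF P = pre ++ 0 :: post := by
  obtain ⟨p, hp, h⟩ := h
  obtain ⟨P1, P2, rfl⟩ := List.append_of_mem hp
  exact ⟨C.argF P1, C.argF P2, by simp [argF, h]⟩

theorem V_fend (h1 : ∀ P x, C.κ.toFun (C.arg P ++ [C.X x]) = C.F (C.κ.toFun (C.argF P ++ [C.X x]))) :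
    C.V C.fend := by
  intro P x g hP
  obtain ⟨pre, post, h⟩ := C.argF_dead hP
  rw [fend_apply, h1, h, List.append_assoc, List.cons_append, mult_zero, map_zero, zero_mul]

theorem V_fend' : C.V C.fend' := by
  intro P x g hP
  obtain ⟨pre, post, h⟩ := C.argF_dead hP
  rw [fend'_apply, h, List.append_assoc, List.cons_append, mult_zero, ZeroMemClass.coe_zero, zero_mul]

theorem pass {a : C.RR} (ha : a ∈ C.W C.DS) : ∀ {f : C.FF}, C.V f → ∀ (P x g),
    (∀ h ∈ C.W C.DS, C.F (C.E (g * h.1)) = 0) → C.ev a f P x g = f.1 P x (g * a.1) := by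
  rw [W] at ha
  induction ha using Subring.closure_induction with
  | mem r hr =>
    intro f hf P x g hg
    rcases hr with ⟨i, rfl⟩ | ⟨b, -, rfl⟩
    · have h1 : ∃ p ∈ P ++ [(x, C.E g)], C.F p.2 = 0 := by
        have := hg 1 (Subring.one_mem _)
        rw [Prod.fst_one, mul_one] at this
        exact ⟨(x, C.E g), by simp, this⟩
      show f.1 (P ++ [(x, C.E g)]) i 1 + f.1 P x (g * C.X i) = _
      rw [hf _ _ _ h1, zero_add]
      rfl
    · rfl
  | zero =>
    intro f hf P x g hg
    rw [ev_zero, Prod.fst_zero, mul_zero, FF_gap_zero]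
  | one =>
    intro f hf P x g hg
    rw [ev_one, Prod.fst_one, mul_one]
  | add r s _ _ hr hs =>
    intro f hf P x g hg
    rw [ev_add, hr hf P x g hg, hs hf P x g hg, Prod.fst_add, mul_add, FF_gap]
  | neg r _ hr =>
    intro f hf P x g hg
    rw [ev_neg, hr hf P x g hg, Prod.fst_neg, mul_neg, neg_eq_iff_add_eq_zero, ← FF_gap,
      add_neg_cancel, FF_gap_zero]
  | mul r s hr' hs' hr hs =>
    intro f hf P x g hg
    rw [ev_mul, hr (C.V_ev hf (C.W_mono le_top hs')) P x g hg, Prod.fst_mul, ← mul_assoc]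
    refine hs hf P x (g * r.1) fun h hh => ?_
    have := hg (r * h) (mul_mem hr' hh)
    rwa [Prod.fst_mul, ← mul_assoc] at this

/-- alternating products -/
def zp (L : List (B × C.RR)) : C.RR := (L.map fun p => C.gB p.1 * p.2).prod

theorem zp_nil : C.zp [] = 1 := rfl
theorem zp_cons (p L) : C.zp (p :: L) = C.gB p.1 * (p.2 * C.zp L) := by
  simp [zp, mul_assoc]
theorem zp_append (L L') : C.zp (L ++ L') = C.zp L * C.zp L' := by
  simp [zp]

def Good (L : List (B × C.RR)) : Prop :=
  ∀ p ∈ L, C.F p.1 = 0 ∧ p.2 ∈ C.W C.DS ∧ C.E p.2.1 = 0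

theorem Good.cons {p L} (h1 : C.F p.1 = 0) (h2 : p.2 ∈ C.W C.DS) (h3 : C.E p.2.1 = 0)
    (h : C.Good L) : C.Good (p :: L) := by
  intro q hq
  rcases List.mem_cons.1 hq with rfl | hq
  · exact ⟨h1, h2, h3⟩
  · exact h q hq

theorem Good.tail {p L} (h : C.Good (p :: L)) : C.Good L := fun q hq => h q (List.mem_cons_of_mem _ hq)

theorem zp_mem {L} (h : C.Good L) : C.zp L ∈ C.W ⊤ := by
  induction L with
  | nil => exact Subring.one_mem _
  | cons p L ih =>
    rw [zp_cons]
    exact mul_mem (C.gB_mem trivial) (mul_mem (C.W_mono le_top (h p (by simp)).2.1) (ih h.tail))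

theorem chain {f : C.FF} (hf : C.V f) (P x) (L) (hL : C.Good L) : ∀ g,
    (∀ L1 p L2, L = L1 ++ p :: L2 → ∀ h ∈ C.W C.DS,
      C.F (C.E (g * (C.zp L1).1 * C.ι p.1 * h.1)) = 0) →
    C.ev (C.zp L) f P x g = f.1 P x (g * (C.zp L).1) := by
  induction L with
  | nil => intro g _; rw [zp_nil, ev_one, Prod.fst_one, mul_one]
  | cons p L ih =>
    intro g hg
    have h0 : ∀ h ∈ C.W C.DS, C.F (C.E (g * C.ι p.1 * h.1)) = 0 := by
      intro h hh
      have := hg [] p L rfl h hh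
      rwa [zp_nil, Prod.fst_one, mul_one] at this
    rw [zp_cons, ev_gB, ev_mul,
      C.pass (hL p (by simp)).2.1 (C.V_ev hf (C.zp_mem hL.tail)) P x _ h0]
    have := ih hL.tail (g * C.ι p.1 * p.2.1) (by
      intro L1 q L2 e h hh
      have := hg (p :: L1) q L2 (by rw [e]; rfl) h hh
      rw [zp_cons, Prod.fst_mul, Prod.fst_mul, gB_fst] at this
      simpa only [mul_assoc] using this)
    refine this.trans ?_
    rw [Prod.fst_mul, Prod.fst_mul, gB_fst]
    simp only [mul_assoc]

theorem chain_of_Z (hEA : ∀ a ∈ C.A, C.E a ∈ C.D) {f : C.FF} (hf : C.V f) (P x) (L) (hL : C.Good L)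
    (g : M) (hg : C.E g ∈ C.D)
    (hZ : ∀ L', C.Good L' → L' ≠ [] → L'.length ≤ L.length → C.E (g * (C.zp L').1) = 0) :
    C.ev (C.zp L) f P x g = f.1 P x (g * (C.zp L).1) := by
  refine C.chain hf P x L hL g ?_
  intro L1 p L2 e h hh
  have hp := hL p (by rw [e]; simp)
  have hL1 : C.Good L1 := fun q hq => hL q (by rw [e]; simp [hq])
  have he : C.E h.1 ∈ C.D := hEA _ (C.fst_mem_A hh)
  set h0 : C.RR := h - C.gB (C.E h.1) with hh0
  have h0m : h0 ∈ C.W C.DS := sub_mem hh (C.gB_mem he)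
  have h0E : C.E h0.1 = 0 := by rw [hh0, Prod.fst_sub, map_sub, gB_fst, C.E_ι, sub_self]
  have hsplit : h.1 = h0.1 + C.ι (C.E h.1) := by rw [hh0, Prod.fst_sub, gB_fst, sub_add_cancel]
  have k1 : C.E (g * (C.zp L1).1 * C.ι p.1 * h0.1) = 0 := by
    have := hZ (L1 ++ [(p.1, h0)]) (by
      intro q hq
      rcases List.mem_append.1 hq with hq | hq
      · exact hL1 q hq
      · rw [List.mem_singleton] at hq
        subst hq
        exact ⟨hp.1, h0m, h0E⟩) (by simp) (by rw [e]; simp)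
    rw [zp_append, zp_cons, zp_nil, mul_one, Prod.fst_mul, Prod.fst_mul, gB_fst] at this
    simpa only [mul_assoc] using this
  rw [hsplit, mul_add, map_add, k1, zero_add, C.E_right, C.E_right]
  rcases eq_or_ne L1 [] with h1 | h1
  · subst h1
    rw [zp_nil, Prod.fst_one, mul_one, C.hFbimod _ hg _ he, hp.1, mul_zero, zero_mul]
  · rw [hZ L1 hL1 h1 (by rw [e]; simp), zero_mul, zero_mul, map_zero]

/-- monomials of bounded degree -/
def Deg (n : ℕ) (m : M) : Prop := ∃ d0 ∈ C.D, ∃ lw : List (Fin C.N × B),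
  lw.length ≤ n ∧ (∀ q ∈ lw, q.2 ∈ C.D) ∧ m = C.ι d0 * (C.mon lw).1

theorem Deg.mem {n m} (h : C.Deg n m) : ∃ r ∈ C.W C.DS, r.1 = m := by
  obtain ⟨d, hd, lw, -, hlw, rfl⟩ := h
  exact ⟨C.gB d * C.mon lw, mul_mem (C.gB_mem hd) (C.mon_mem _ lw hlw), rfl⟩

theorem mon_snoc (lw p) : C.mon (lw ++ [p]) = C.mon lw * (C.gX p.1 * C.gB p.2) := by
  simp [mon]

theorem walk {f : C.FF} {K : AddSubgroup B} {n : ℕ} (hf : ∀ P x g, C.Deg n g → f.1 P x g ∈ K)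
    (lw : List (Fin C.N × B)) (hlw : ∀ q ∈ lw, q.2 ∈ C.D) : ∀ P x g k, C.Deg k g →
    k + lw.length ≤ n → C.ev (C.mon lw) f P x g ∈ K := by
  induction lw with
  | nil =>
    rintro P x g k ⟨d, hd, lw, h1, h2⟩ hk
    exact hf P x g ⟨d, hd, lw, by simp at hk; omega, h2⟩
  | cons p lw ih =>
    intro P x g k hg hk
    have ih := ih fun q hq => hlw q (List.mem_cons_of_mem _ hq)
    have hp : p.2 ∈ C.D := hlw p (by simp)
    rw [List.length_cons] at hk
    rw [mon_cons, ev_gX, ev_gB, ev_gB]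
    refine K.add_mem (ih _ _ _ 0 ⟨p.2, hp, [], by simp, by simp, by simp [mon_nil]⟩ (by omega))
      (ih _ _ _ (k + 1) ?_ (by omega))
    obtain ⟨d, hd, l, h1, h2, rfl⟩ := hg
    refine ⟨d, hd, l ++ [p], by simpa using h1, ?_, ?_⟩
    · intro q hq
      rcases List.mem_append.1 hq with hq | hq
      · exact h2 q hq
      · rw [List.mem_singleton] at hq
        subst hq
        exact hp
    · rw [mon_snoc, Prod.fst_mul, Prod.fst_mul, gX_fst, gB_fst]
      simp only [mul_assoc]

theorem EA_of_1
    (h1 : ∀ P x, C.κ.toFun (C.arg P ++ [C.X x]) = C.F (C.κ.toFun (C.argF P ++ [C.X x]))) :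
    ∀ a ∈ C.A, C.E a ∈ C.D := by
  have key : ∀ n g, C.Deg n g → C.E g ∈ C.D := by
    intro n
    induction n with
    | zero =>
      rintro g ⟨d, hd, lw, hl, -, rfl⟩
      have : lw = [] := List.length_eq_zero_iff.1 (by omega)
      subst this
      rw [mon_nil, Prod.fst_one, mul_one, C.E_ι]
      exact hd
    | succ n ih =>
      rintro g ⟨d, hd, lw, hl, hlw, rfl⟩
      cases lw with
      | nil =>
        rw [mon_nil, Prod.fst_one, mul_one, C.E_ι]
        exact hd
      | cons p lw =>
        have hp : p.2 ∈ C.D := hlw p (by simp)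
        have hlw' : ∀ q ∈ lw, q.2 ∈ C.D := fun q hq => hlw q (List.mem_cons_of_mem _ hq)
        have hm : C.gB p.2 * C.mon lw ∈ C.W ⊤ :=
          mul_mem (C.gB_mem trivial) (C.mon_mem _ _ fun _ _ => trivial)
        rw [C.E_left, mon_cons, Prod.fst_mul, gX_fst, C.F1' hm, ev_gB, one_mul]
        refine C.D.mul_mem hd ?_
        refine C.walk (K := C.DS.toAddSubgroup) (n := n) ?_ lw hlw' [] p.1 (C.ι p.2) 0
          ⟨p.2, hp, [], by simp, by simp, by simp [mon_nil]⟩ (by simp at hl; omega)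
        intro P x g hg
        rw [fend_apply, h1]
        exact C.D.mul_mem (C.hFD _) (ih g hg)
  intro a ha
  obtain ⟨r, hr, rfl⟩ := C.lift_A ha
  refine C.W_induction C.DS (p := fun r => C.E r.1 ∈ C.D) ?_ ?_ ?_ ?_ r hr
  · rw [Prod.fst_zero, map_zero]; exact C.D.zero_mem
  · intro r s hr hs
    rw [Prod.fst_add, map_add]; exact C.D.add_mem hr hs
  · intro r hr
    rw [Prod.fst_neg, map_neg]; exact C.D.neg_mem hr
  · intro b0 hb lw hlw
    exact key lw.length _ ⟨b0, hb, lw, le_rfl, hlw, rfl⟩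

theorem Z_of_1
    (h1 : ∀ P x, C.κ.toFun (C.arg P ++ [C.X x]) = C.F (C.κ.toFun (C.argF P ++ [C.X x])))
    (n : ℕ) : ∀ L, C.Good L → L ≠ [] → L.length ≤ n → ∀ r ∈ C.W C.DS,
      C.E (r.1 * (C.zp L).1) = 0 := by
  have hEA := C.EA_of_1 h1
  induction n with
  | zero =>
    intro L _ hL hl
    exact absurd (List.length_eq_zero_iff.1 (by omega)) hL
  | succ n ihn =>
    -- the factor-free case
    have base : ∀ L, C.Good L → L ≠ [] → L.length ≤ n + 1 → C.E ((C.zp L).1) = 0 := by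
      intro L hL hne hl
      obtain ⟨p, L', rfl⟩ := List.exists_cons_of_ne_nil hne
      rw [zp_cons, Prod.fst_mul, Prod.fst_mul, gB_fst, C.E_left]
      have hp := hL p (by simp)
      rcases eq_or_ne L' [] with h | h
      · subst h
        rw [zp_nil, Prod.fst_one, mul_one, hp.2.2, mul_zero]
      · rw [ihn L' hL.tail h (by simpa using hl) _ hp.2.1, mul_zero]
    have key : ∀ k L, C.Good L → L ≠ [] → L.length ≤ n + 1 → ∀ m, C.Deg k m →
        C.E (m * (C.zp L).1) = 0 := by
      intro k
      induction k with
      | zero =>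
        rintro L hL hne hl m ⟨d, hd, lw, hlw, -, rfl⟩
        have : lw = [] := List.length_eq_zero_iff.1 (by omega)
        subst this
        rw [mon_nil, Prod.fst_one, mul_one, C.E_left, base L hL hne hl, mul_zero]
      | succ k ihk =>
        rintro L hL hne hl m ⟨d, hd, lw, hlen, hlw, rfl⟩
        cases lw with
        | nil => rw [mon_nil, Prod.fst_one, mul_one, C.E_left, base L hL hne hl, mul_zero]
        | cons p lw =>
          have hp : p.2 ∈ C.D := hlw p (by simp)
          have hlw' : ∀ q ∈ lw, q.2 ∈ C.D := fun q hq => hlw q (List.mem_cons_of_mem _ hq)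
          have hm : C.gB p.2 * (C.mon lw * C.zp L) ∈ C.W ⊤ :=
            mul_mem (C.gB_mem trivial) (mul_mem (C.mon_mem _ _ fun _ _ => trivial) (C.zp_mem hL))
          have e : C.ι d * (C.mon (p :: lw)).1 * (C.zp L).1
              = C.ι d * (C.X p.1 * (C.gB p.2 * (C.mon lw * C.zp L)).1) := by
            rw [mon_cons]
            simp only [Prod.fst_mul, gX_fst, mul_assoc]
          rw [e, C.E_left, C.F1' hm, ev_gB, one_mul, ev_mul]
          have hw : C.ev (C.mon lw) ((C.zp L).2 C.fend) [] p.1 (C.ι p.2) ∈ (⊥ : AddSubgroup B) := by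
            refine C.walk (n := k) ?_ lw hlw' [] p.1 (C.ι p.2) 0
              ⟨p.2, hp, [], by simp, by simp, by simp [mon_nil]⟩ (by simp at hlen; omega)
            intro P x g hg
            have hgD : C.E g ∈ C.D := by
              obtain ⟨r, hr, rfl⟩ := hg.mem
              exact hEA _ (C.fst_mem_A hr)
            have := C.chain_of_Z hEA (C.V_fend h1) P x L hL g hgD
              (fun L' hL' hne' hl' => ihk L' hL' hne' (hl'.trans hl) g hg)
            rw [AddSubgroup.mem_bot]
            refine this.trans ?_
            rw [fend_apply, ihk L hL hne hl g hg, mul_zero]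
          rw [AddSubgroup.mem_bot] at hw
          rw [hw, mul_zero]
    intro L hL hne hl
    apply C.W_induction
    · rw [Prod.fst_zero, zero_mul, map_zero]
    · intro r s hr hs
      rw [Prod.fst_add, add_mul, map_add, hr, hs, add_zero]
    · intro r hr
      rw [Prod.fst_neg, neg_mul, map_neg, hr, neg_zero]
    · intro b0 hb lw hlw
      exact key lw.length L hL hne hl _ ⟨b0, hb, lw, le_rfl, hlw, rfl⟩

theorem flat_exists (hEA : ∀ a ∈ C.A, C.E a ∈ C.D) (n : ℕ) : ∀ l : List (M × Bool), l.length ≤ n →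
    List.IsChain (fun p q : M × Bool => p.2 ≠ q.2) ((1, true) :: l) →
    (∀ p ∈ l, p.1 ∈ (if p.2 then C.A else C.ι.range) ∧ C.F (C.E p.1) = 0) →
    ∃ L c, C.Good L ∧ (l.map Prod.fst).prod = (C.zp L).1 * C.ι c := by
  induction n with
  | zero =>
    intro l hl _ _
    have : l = [] := List.length_eq_zero_iff.1 (by omega)
    subst this
    exact ⟨[], 1, by intro p hp; simp at hp, by simp [zp_nil]⟩
  | succ n ih =>
    intro l hl hc hm
    rcases l with _ | ⟨⟨b, β⟩, _ | ⟨⟨a, α⟩, l⟩⟩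
    · exact ⟨[], 1, by intro p hp; simp at hp, by simp [zp_nil]⟩
    · have h1 := hm (b, β) (by simp)
      have hβ : β = false := by simpa [List.isChain_cons_cons] using hc
      subst hβ
      obtain ⟨⟨c, hc⟩, h2⟩ := h1
      exact ⟨[], c, by intro p hp; simp at hp, by simpa [zp_nil] using hc.symm⟩
    · rw [List.isChain_cons_cons, List.isChain_cons_cons] at hc
      obtain ⟨e1, e2, hc⟩ := hc
      have hβ : β = false := by simpa using e1
      subst hβ
      have hα : α = true := by simpa using e2
      subst hα
      obtain ⟨⟨c, hcb⟩, h2⟩ := hm (b, false) (by simp)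
      obtain ⟨ha, h3⟩ := hm (a, true) (by simp)
      have ha : a ∈ C.A := ha
      have hcb : C.ι c = b := hcb
      subst hcb
      obtain ⟨r, hr, rfl⟩ := C.lift_A ha
      have hch : List.IsChain (fun p q : M × Bool => p.2 ≠ q.2) ((1, true) :: l) := by
        cases l with
        | nil => exact List.isChain_singleton _
        | cons q l =>
          rw [List.isChain_cons_cons] at hc ⊢
          exact hc
      obtain ⟨L, c', hL, e⟩ := ih l (by simp at hl; omega) hch
        (fun p hp => hm p (by simp [hp]))
      refine ⟨(c, r) :: L, c', Good.cons C ?_ hr ?_ hL, ?_⟩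
      · have h2 : C.F (C.E (C.ι c)) = 0 := h2
        rwa [C.E_ι] at h2
      · have h3 : C.F (C.E r.1) = 0 := h3
        rwa [C.hFid _ (hEA _ (C.fst_mem_A hr))] at h3
      · rw [List.map_cons, List.map_cons, List.prod_cons, List.prod_cons, e, zp_cons]
        simp only [Prod.fst_mul, gB_fst, mul_assoc]

theorem free_of_1
    (h1 : ∀ P x, C.κ.toFun (C.arg P ++ [C.X x]) = C.F (C.κ.toFun (C.argF P ++ [C.X x]))) :
    FreeWithAmalgamation (fun m => C.F (C.E m)) C.A C.ι.range := by
  have hEA := C.EA_of_1 h1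
  have main : ∀ a l, List.IsChain (fun p q : M × Bool => p.2 ≠ q.2) ((a, true) :: l) →
      (∀ p ∈ (a, true) :: l, p.1 ∈ (if p.2 then C.A else C.ι.range) ∧ C.F (C.E p.1) = 0) →
      C.E (((a, true) :: l).map Prod.fst).prod = 0 := by
    intro a l hc hm
    obtain ⟨ha, h3⟩ := hm (a, true) (by simp)
    have ha : a ∈ C.A := ha
    have h3 : C.F (C.E a) = 0 := h3
    rw [C.hFid _ (hEA _ ha)] at h3
    have hch : List.IsChain (fun p q : M × Bool => p.2 ≠ q.2) ((1, true) :: l) := by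
      cases l with
      | nil => exact List.isChain_singleton _
      | cons q l =>
        rw [List.isChain_cons_cons] at hc ⊢
        exact hc
    obtain ⟨L, c, hL, e⟩ := C.flat_exists hEA l.length l le_rfl hch
      (fun p hp => hm p (List.mem_cons_of_mem _ hp))
    obtain ⟨r, hr, rfl⟩ := C.lift_A ha
    rw [List.map_cons, List.prod_cons, e, ← mul_assoc, C.E_right]
    rcases eq_or_ne L [] with h | h
    · subst h
      rw [zp_nil, Prod.fst_one, mul_one, h3, zero_mul]
    · rw [C.Z_of_1 h1 L.length L hL h le_rfl r hr, zero_mul]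
  intro l hne hc hm
  rcases l with _ | ⟨⟨a, α⟩, l⟩
  · exact absurd rfl hne
  cases α with
  | true =>
    show C.F (C.E _) = 0
    rw [main a l hc hm, map_zero]
  | false =>
    obtain ⟨⟨c, hcb⟩, h2⟩ := hm (a, false) (by simp)
    have hcb : C.ι c = a := hcb
    subst hcb
    have h2 : C.F (C.E (C.ι c)) = 0 := h2
    rcases l with _ | ⟨⟨a, α⟩, l⟩
    · simpa using h2
    · have hc' := List.isChain_cons_cons.1 hc
      have hα : α = true := by simpa using hc'.1
      subst hα
      show C.F (C.E _) = 0
      rw [List.map_cons, List.prod_cons, C.E_left,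
        main a l hc'.2 (fun p hp => hm p (List.mem_cons_of_mem _ hp)), mul_zero, map_zero]

end Ctx
end OVFree
namespace OVFree
namespace Ctx

variable {B M : Type*} [Ring B] [Algebra ℂ B] [Ring M] [Algebra ℂ M] (C : Ctx B M)

/-- freeness of the variables from `B` -/
def Fr : Prop := FreeWithAmalgamation (fun m => C.F (C.E m)) C.A C.ι.range

/-- flatten an alternating product -/
def flat : List (B × C.RR) → List (M × Bool)
  | [] => []
  | p :: L => (C.ι p.1, false) :: (p.2.1, true) :: flat L

theorem flat_prod (L) : ((C.flat L).map Prod.fst).prod = (C.zp L).1 := by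
  induction L with
  | nil => rfl
  | cons p L ih => rw [flat, zp_cons, Prod.fst_mul, Prod.fst_mul, gB_fst]; simp [ih]

theorem flat_chain (tail : List (M × Bool)) (ht : tail = [] ∨ ∃ c, tail = [(c, false)]) (L) :
    ∀ m, List.IsChain (fun p q : M × Bool => p.2 ≠ q.2) ((m, true) :: (C.flat L ++ tail)) := by
  induction L with
  | nil =>
    intro m
    rcases ht with rfl | ⟨c, rfl⟩
    · exact List.isChain_singleton _
    · rw [flat, List.nil_append, List.isChain_cons_cons]
      exact ⟨by simp, List.isChain_singleton _⟩
  | cons p L ih =>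
    intro m
    rw [flat, List.cons_append, List.cons_append, List.isChain_cons_cons, List.isChain_cons_cons]
    exact ⟨by simp, by simp, ih _⟩

theorem flat_good {L} (hL : C.Good L) : ∀ p ∈ C.flat L,
    p.1 ∈ (if p.2 then C.A else C.ι.range) ∧ C.F (C.E p.1) = 0 := by
  induction L with
  | nil => intro p hp; simp [flat] at hp
  | cons q L ih =>
    intro p hp
    have hq := hL q (by simp)
    rw [flat, List.mem_cons, List.mem_cons] at hp
    rcases hp with rfl | rfl | hp
    · refine ⟨?_, ?_⟩
      · simp
      · simpa [C.E_ι] using hq.1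
    · refine ⟨?_, ?_⟩
      · simpa using C.fst_mem_A hq.2.1
      · simp [hq.2.2]
    · exact ih hL.tail p hp

theorem Cz0 (hfree : C.Fr) {r : C.RR} (hr : r ∈ C.W C.DS) (h0 : C.F (C.E r.1) = 0) {L}
    (hL : C.Good L) : C.E (r.1 * (C.zp L).1) = 0 := by
  have key : ∀ tail : List (M × Bool), (tail = [] ∨ ∃ c, C.F c = 0 ∧ tail = [(C.ι c, false)]) →
      C.F (C.E (r.1 * (C.zp L).1 * (tail.map Prod.fst).prod)) = 0 := by
    intro tail ht
    have := hfree ((r.1, true) :: (C.flat L ++ tail)) (by simp)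
      (C.flat_chain tail (by
        rcases ht with h | ⟨c, -, h⟩
        · exact Or.inl h
        · exact Or.inr ⟨_, h⟩) L _) ?_
    · simp only [List.map_cons, List.map_append, List.prod_cons, List.prod_append, flat_prod] at this
      rw [mul_assoc]
      exact this
    · intro p hp
      rw [List.mem_cons, List.mem_append] at hp
      rcases hp with rfl | hp | hp
      · exact ⟨by simpa using C.fst_mem_A hr, h0⟩
      · exact C.flat_good hL p hp
      · rcases ht with rfl | ⟨c, hc, rfl⟩
        · simp at hp
        · rw [List.mem_singleton] at hp
          subst hp
          exact ⟨by simp, by simpa [C.E_ι] using hc⟩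
  apply C.hFfaithful
  intro b
  have k1 := key [] (Or.inl rfl)
  have k2 := key [(C.ι (b - C.F b), false)] (Or.inr ⟨b - C.F b, by
    rw [map_sub, C.hFid _ (C.hFD b), sub_self], rfl⟩)
  simp only [List.map_nil, List.prod_nil, mul_one, List.map_cons, List.prod_cons, C.E_right] at k1 k2
  rw [mul_sub, map_sub, C.F_right (C.hFD b), k1, zero_mul, sub_zero] at k2
  exact k2

theorem EA_of_free (hfree : C.Fr) : ∀ a ∈ C.A, C.E a ∈ C.D := by
  intro a ha
  obtain ⟨r, hr, rfl⟩ := C.lift_A ha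
  have := C.Cz0 hfree (r := r - C.gB (C.F (C.E r.1))) (sub_mem hr (C.gB_mem (C.hFD _)))
    (by rw [Prod.fst_sub, gB_fst, map_sub, map_sub, C.E_ι, C.hFid _ (C.hFD _), sub_self])
    (L := []) (by intro p hp; simp at hp)
  rw [zp_nil, Prod.fst_one, mul_one, Prod.fst_sub, gB_fst, map_sub, C.E_ι, sub_eq_zero] at this
  rw [this]
  exact C.hFD _

theorem Cz (hfree : C.Fr) {a : C.RR} (ha : a ∈ C.W C.DS) {L} (hL : C.Good L) (hne : L ≠ []) :
    C.E (a.1 * (C.zp L).1) = 0 := by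
  have h1 := C.Cz0 hfree (r := a - C.gB (C.F (C.E a.1))) (sub_mem ha (C.gB_mem (C.hFD _)))
    (by rw [Prod.fst_sub, gB_fst, map_sub, map_sub, C.E_ι, C.hFid _ (C.hFD _), sub_self]) hL
  obtain ⟨p, L, rfl⟩ := List.exists_cons_of_ne_nil hne
  have hp := hL p (by simp)
  have h2 := C.Cz0 hfree hp.2.1 (by rw [hp.2.2, map_zero]) hL.tail
  rw [Prod.fst_sub, gB_fst, sub_mul, map_sub, C.E_left] at h1
  have h3 : C.E (C.zp (p :: L)).1 = 0 := by
    rw [zp_cons, Prod.fst_mul, Prod.fst_mul, gB_fst, C.E_left, h2, mul_zero]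
  rw [h3, mul_zero, sub_zero] at h1
  exact h1

theorem ring_id1 {R : Type*} [Ring R] (u p f r z b : R) :
    u * (p * (r * z) * b) = 1 * ((u * p - f) * (r * z) * b) + f * r * (z * b) := by
  noncomm_ring

theorem ring_id2 {R : Type*} [Ring R] (c a f e z b : R) :
    c * (a * (z * b)) = f * a * (z * b) + 1 * ((c - f) * ((a - e) * z) * b)
      + (c - f) * e * (z * b) := by
  noncomm_ring

/-- span of the normal forms -/
def T : AddSubgroup C.RR := AddSubgroup.closure
  {p | ∃ a ∈ C.W C.DS, ∃ L, C.Good L ∧ ∃ b, p = a * (C.zp L * C.gB b)}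

theorem T_gen {a : C.RR} (ha : a ∈ C.W C.DS) {L} (hL : C.Good L) (b) :
    a * (C.zp L * C.gB b) ∈ C.T := AddSubgroup.subset_closure ⟨a, ha, L, hL, b, rfl⟩

theorem T_left {x : C.RR} (hx : ∀ a ∈ C.W C.DS, ∀ L, C.Good L → ∀ b,
    x * (a * (C.zp L * C.gB b)) ∈ C.T) {p : C.RR} (hp : p ∈ C.T) : x * p ∈ C.T := by
  unfold T at hp
  induction hp using AddSubgroup.closure_induction with
  | mem p hp =>
    obtain ⟨a, ha, L, hL, b, rfl⟩ := hp
    exact hx a ha L hL b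
  | zero => rw [mul_zero]; exact zero_mem _
  | add p q _ _ hp hq => rw [mul_add]; exact add_mem hp hq
  | neg p _ hp =>
    have e : x * -p = -(x * p) := mul_neg x p
    rw [e]; exact neg_mem hp

theorem T_gB_zp {L} (hL : C.Good L) (u b) : C.gB u * (C.zp L * C.gB b) ∈ C.T := by
  cases L with
  | nil =>
    rw [zp_nil, one_mul, ← map_mul]
    have := C.T_gen (one_mem _) hL (u * b)
    rwa [zp_nil, one_mul, one_mul] at this
  | cons p L =>
    have hp := hL p (by simp)
    have e : C.gB u * (C.zp (p :: L) * C.gB b)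
        = 1 * (C.zp ((u * p.1 - C.F (u * p.1), p.2) :: L) * C.gB b)
          + (C.gB (C.F (u * p.1)) * p.2) * (C.zp L * C.gB b) := by
      simp only [zp_cons, map_sub, map_mul]
      exact ring_id1 _ _ _ _ _ _
    rw [e]
    have hG : C.Good ((u * p.1 - C.F (u * p.1), p.2) :: L) :=
      Good.cons C (by simp only [map_sub, C.hFid _ (C.hFD _), sub_self]) hp.2.1 hp.2.2 hL.tail
    exact add_mem (C.T_gen (one_mem _) hG b)
      (C.T_gen (mul_mem (C.gB_mem (C.hFD _)) hp.2.1) hL.tail b)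

theorem T_gB (hEA : ∀ a ∈ C.A, C.E a ∈ C.D) (c : B) {a : C.RR} (ha : a ∈ C.W C.DS) {L}
    (hL : C.Good L) (b) : C.gB c * (a * (C.zp L * C.gB b)) ∈ C.T := by
  have hE := hEA _ (C.fst_mem_A ha)
  have e : C.gB c * (a * (C.zp L * C.gB b))
      = (C.gB (C.F c) * a) * (C.zp L * C.gB b)
        + 1 * (C.zp ((c - C.F c, a - C.gB (C.E a.1)) :: L) * C.gB b)
        + C.gB ((c - C.F c) * C.E a.1) * (C.zp L * C.gB b) := by
    simp only [zp_cons, map_sub, map_mul]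
    exact ring_id2 _ _ _ _ _ _
  rw [e]
  refine add_mem (add_mem (C.T_gen (mul_mem (C.gB_mem (C.hFD _)) ha) hL b)
    (C.T_gen (one_mem _) (Good.cons C ?_ ?_ ?_ hL) b)) (C.T_gB_zp hL _ _)
  · simp only [map_sub, C.hFid _ (C.hFD _), sub_self]
  · exact sub_mem ha (C.gB_mem hE)
  · simp only [Prod.fst_sub, gB_fst, map_sub, C.E_ι, sub_self]

theorem W_le_T (hEA : ∀ a ∈ C.A, C.E a ∈ C.D) {p : C.RR} (hp : p ∈ C.W ⊤) : p ∈ C.T := by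
  have key : ∀ m ∈ Submonoid.closure (Set.range C.gX ∪ C.gB '' (⊤ : Subring B)), m ∈ C.T := by
    intro m hm
    induction hm using Submonoid.closure_induction_left with
    | one =>
      have := C.T_gen (one_mem _) (L := []) (by intro p hp; simp at hp) 1
      rwa [zp_nil, one_mul, one_mul, map_one] at this
    | mul_left x hx y hy ih =>
      rcases hx with ⟨i, rfl⟩ | ⟨c, -, rfl⟩
      · refine C.T_left (fun a ha L hL b => ?_) ih
        rw [← mul_assoc]
        exact C.T_gen (mul_mem (C.gX_mem _ i) ha) hL b
      · exact C.T_left (fun a ha L hL b => C.T_gB hEA c ha hL b) ih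
  rw [W, Subring.mem_closure_iff] at hp
  exact (AddSubgroup.closure_le _).2 key hp

theorem ev_van {a : C.RR} (ha : a ∈ C.W C.DS) : ∀ {f : C.FF},
    (∀ P x, ∀ g ∈ C.A, f.1 P x g = 0) → ∀ P x, ∀ g ∈ C.A, C.ev a f P x g = 0 := by
  rw [W] at ha
  induction ha using Subring.closure_induction with
  | mem r hr =>
    intro f hf P x g hg
    rcases hr with ⟨i, rfl⟩ | ⟨b, hb, rfl⟩
    · have := C.ev_gX i 1 f P x g
      rw [mul_one] at this
      rw [this, ev_one, ev_one, hf _ _ _ (one_mem _), hf _ _ _ (mul_mem hg (C.X_mem_A i)), add_zero]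
    · rw [ev_gB']
      exact hf _ _ _ (mul_mem hg (C.ι_mem_A hb))
  | zero => intro f hf P x g hg; exact C.ev_zero _ _ _ _
  | one => intro f hf P x g hg; exact hf P x g hg
  | add r s _ _ hr hs => intro f hf P x g hg; rw [ev_add, hr hf _ _ _ hg, hs hf _ _ _ hg, add_zero]
  | neg r _ hr => intro f hf P x g hg; rw [ev_neg, hr hf _ _ _ hg, neg_zero]
  | mul r s _ _ hr hs =>
    intro f hf P x g hg
    rw [ev_mul]
    exact hr (fun P x g hg => hs hf P x g hg) P x g hg

theorem Rdash_nil (hEA : ∀ a ∈ C.A, C.E a ∈ C.D) (b : B) (x) : ∀ a ∈ C.W C.DS,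
    C.E (C.X x * (a * C.gB b).1) = C.ev (a * C.gB b) C.fend' [] x 1 := by
  apply C.W_induction
  · rw [zero_mul, Prod.fst_zero, mul_zero, map_zero, ev_zero]
  · intro r s hr hs
    rw [add_mul, Prod.fst_add, mul_add, map_add, hr, hs, ev_add]
  · intro r hr
    have e : -r * C.gB b = -(r * C.gB b) := neg_mul r (C.gB b)
    rw [e, Prod.fst_neg, mul_neg, map_neg, hr, ev_neg]
  · intro d hd lw hlw
    have h1 := C.GG_evD hEA b lw hlw [] x d 1 hd (one_mem _)
    have h2 := F1 C.ED C.κD C.hκD C.ED_one (C.X x * C.ι d) (lw.map fun p => C.X p.1 * C.ι p.2)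
    have hmem : C.X x * (C.gB d * C.mon lw).1 ∈ C.A :=
      mul_mem (C.X_mem_A x) (C.fst_mem_A (mul_mem (C.gB_mem hd) (C.mon_mem _ lw hlw)))
    have h3 := C.hED (C.X x * (C.gB d * C.mon lw).1)
    rw [C.hFid _ (hEA _ hmem)] at h3
    rw [Prod.fst_mul, ← mul_assoc, gB_fst, C.E_right, ← h3, mul_assoc (C.gB d), ev_gB, one_mul]
    rw [mul_one] at h1
    rw [← h1, Prod.fst_mul, gB_fst, mon_fst, ← mul_assoc, h2]
    rfl

theorem Rdash (hfree : C.Fr) (x) {p : C.RR} (hp : p ∈ C.W ⊤) :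
    C.E (C.X x * p.1) = C.ev p C.fend' [] x 1 := by
  have hEA := C.EA_of_free hfree
  replace hp := C.W_le_T hEA hp
  unfold T at hp
  induction hp using AddSubgroup.closure_induction with
  | zero => rw [Prod.fst_zero, mul_zero, map_zero, ev_zero]
  | add r s _ _ hr hs => rw [Prod.fst_add, mul_add, map_add, hr, hs, ev_add]
  | neg r _ hr => rw [Prod.fst_neg, mul_neg, map_neg, hr, ev_neg]
  | mem p hp =>
    obtain ⟨a, ha, L, hL, b, rfl⟩ := hp
    by_cases hne : L = []
    · subst hne
      rw [zp_nil, one_mul]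
      exact C.Rdash_nil hEA b x a ha
    · have h1 := C.Cz hfree (mul_mem (C.gX_mem _ x) ha) hL hne
      rw [Prod.fst_mul, Prod.fst_mul, gB_fst, ← mul_assoc, ← mul_assoc, C.E_right]
      rw [Prod.fst_mul, gX_fst] at h1
      rw [h1, zero_mul, ev_mul]
      symm
      refine C.ev_van ha (fun P y g hg => ?_) [] x 1 (one_mem _)
      obtain ⟨r, hr, rfl⟩ := C.lift_A hg
      have hV : C.V ((C.gB b).2 C.fend') := C.V_ev C.V_fend' (C.gB_mem trivial)
      have h2 := C.chain_of_Z hEA hV P y L hL r.1 (hEA _ hg)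
        (fun L' hL' hne' _ => C.Cz hfree hr hL' hne')
      have h3 : C.ev (C.gB b) C.fend' P y (r.1 * (C.zp L).1) = 0 := by
        rw [ev_gB', fend'_apply, C.E_right, C.Cz hfree hr hL hne, zero_mul, mul_zero]
      exact h2.trans h3

/-- head of the index word -/
def hd : List (Fin C.N × B) → Fin C.N → Fin C.N
  | [], y => y
  | p :: _, _ => p.1

/-- extraction words -/
def pw : List (Fin C.N × B) → Fin C.N → C.RR
  | [], _ => 1
  | p :: Q, y => C.gB p.2 * (C.gX (C.hd Q y) * pw Q y)

theorem pw_mem (Q y) : C.pw Q y ∈ C.W ⊤ := by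
  induction Q with
  | nil => exact one_mem _
  | cons p Q ih => exact mul_mem (C.gB_mem trivial) (mul_mem (C.gX_mem _ _) ih)

theorem pw_small {f : C.FF} {n : ℕ} (hf : ∀ P x g, P.length < n → f.1 P x g = 0) (Q y) :
    ∀ P x g, P.length + Q.length < n → C.ev (C.pw Q y) f P x g = 0 := by
  induction Q with
  | nil => intro P x g h; exact hf P x g (by simpa using h)
  | cons p Q ih =>
    intro P x g h
    simp only [List.length_cons] at h
    rw [pw, ev_gB, ev_gX, ih _ _ _ (by simp; omega), ih _ _ _ (by omega), add_zero]

theorem pw_eq {f : C.FF} {n : ℕ} (hf : ∀ P x g, P.length < n → f.1 P x g = 0) (Q y) :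
    ∀ P, P.length + Q.length = n → C.ev (C.pw Q y) f P (C.hd Q y) 1 = f.1 (P ++ Q) y 1 := by
  induction Q with
  | nil => intro P h; rw [List.append_nil]; rfl
  | cons p Q ih =>
    intro P h
    simp only [List.length_cons] at h
    rw [pw, ev_gB, ev_gX, C.pw_small hf Q y P _ _ (by omega), add_zero, ih _ (by simp; omega),
      one_mul, C.E_ι, hd]
    simp

theorem two_of_free (hfree : C.Fr) (P x) :
    C.κ.toFun (C.arg P ++ [C.X x]) = (C.κD.toFun (C.argF P ++ [C.X x]) : B) := by
  have key : ∀ n : ℕ, ∀ P x, P.length < n → (C.fend - C.fend').1 P x 1 = 0 := by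
    intro n
    induction n with
    | zero => intro P x h; omega
    | succ n ih =>
      intro P x h
      have hf : ∀ P x g, P.length < n → (C.fend - C.fend').1 P x g = 0 := by
        intro P x g h
        have h1 := ih P x h
        have e : ∀ g, (C.fend - C.fend').1 P x g = C.fend.1 P x g - C.fend'.1 P x g := fun g => rfl
        rw [e, fend_apply, fend'_apply, C.E_one, mul_one, mul_one] at h1
        rw [e, fend_apply, fend'_apply, ← sub_mul, h1, zero_mul]
      rcases Nat.lt_succ_iff_lt_or_eq.1 h with h' | h'
      · exact hf _ _ _ h'
      · have h2 := C.pw_eq hf P x [] (by simpa using h')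
        rw [List.nil_append] at h2
        rw [← h2, ev_fsub, ← C.F1' (C.pw_mem P x), ← C.Rdash hfree _ (C.pw_mem P x), sub_self]
  have h := key (P.length + 1) P x (by omega)
  have e : (C.fend - C.fend').1 P x 1 = C.fend.1 P x 1 - C.fend'.1 P x 1 := rfl
  rw [e, fend_apply, fend'_apply, C.E_one, mul_one, mul_one, sub_eq_zero] at h
  exact h

theorem one_of_two
    (h2 : ∀ P x, C.κ.toFun (C.arg P ++ [C.X x]) = (C.κD.toFun (C.argF P ++ [C.X x]) : B)) (P x) :
    C.κ.toFun (C.arg P ++ [C.X x]) = C.F (C.κ.toFun (C.argF P ++ [C.X x])) := by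
  have e1 : C.arg (P.map fun p => (p.1, C.F p.2)) = C.argF P := by
    simp [arg, argF, Function.comp_def]
  have e2 : C.argF (P.map fun p => (p.1, C.F p.2)) = C.argF P := by
    simp [argF, Function.comp_def, C.hFid _ (C.hFD _)]
  have h := h2 (P.map fun p => (p.1, C.F p.2)) x
  rw [e1, e2] at h
  rw [h2, h, C.hFid _ (Subtype.property _)]

theorem Fr_iff_one : C.Fr ↔
    ∀ P x, C.κ.toFun (C.arg P ++ [C.X x]) = C.F (C.κ.toFun (C.argF P ++ [C.X x])) :=
  ⟨fun h => C.one_of_two (C.two_of_free h), C.free_of_1⟩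

theorem Fr_iff_two : C.Fr ↔
    ∀ P x, C.κ.toFun (C.arg P ++ [C.X x]) = (C.κD.toFun (C.argF P ++ [C.X x]) : B) :=
  ⟨C.two_of_free, fun h => C.free_of_1 (C.one_of_two h)⟩

end Ctx

/-- passage between lists and tuples -/
theorem list_tuple {α β : Type*} {p : List (α × β) → α → Prop} :
    (∀ P x, p P x) ↔ ∀ (k : ℕ) (i : Fin (k + 1) → α) (b : Fin k → β),
      p ((List.finRange k).map fun j => (i j.castSucc, b j)) (i (Fin.last k)) := by
  constructor
  · intro h k i b
    exact h _ _
  · intro h P x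
    have := h P.length (Fin.snoc (fun j : Fin P.length => (P.get j).1) x) (fun j => (P.get j).2)
    simpa using this

end OVFree
/-- **main theorem.** Let `(M, E : M → B)` be a `B`-probability space (with
`ι : B → M` the inclusion of `B` as a unital subalgebra), `D ⊆ B` a unital subalgebra and
`F : B → D` a conditional expectation satisfying the faithfulness condition
(`F(b₁ b₂) = 0` for all `b₂` implies `b₁ = 0`).  Let `X₁, …, X_N ∈ M`, let `κ` be the
`B`-valued cumulant map of `(M, E)` and `κD` the `D`-valued cumulant map of `(M, F∘E)`
(`ED` is `F∘E` viewed as a map into `D`).  Then `X₁, …, X_N` are free from `B` with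
amalgamation over `D` (with respect to `F∘E`) iff
`k_{B;i₁,…,i_k}(b₁, …, b_{k−1}) = F(k_{B;i₁,…,i_k}(F(b₁), …, F(b_{k−1})))` for all `k`,
all indices and all `bⱼ ∈ B`; equivalently, iff
`k_{B;i₁,…,i_k}(b₁, …, b_{k−1}) = k_{D;i₁,…,i_k}(F(b₁), …, F(b_{k−1}))`. -/
theorem freeness_iff_R_transform_factorization
    {B M : Type*} [Ring B] [Algebra ℂ B] [Ring M] [Algebra ℂ M]
    (ι : B →ₐ[ℂ] M) (hι : Function.Injective ι)
    (E : M →ₗ[ℂ] B) (hE : IsCondExp ι E)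
    (D : Subalgebra ℂ B)
    (F : B →ₗ[ℂ] B) (hFD : ∀ b, F b ∈ D) (hFid : ∀ d ∈ D, F d = d)
    (hFbimod : ∀ d ∈ D, ∀ d' ∈ D, ∀ b : B, F (d * b * d') = d * F b * d')
    (hFfaithful : ∀ b₁ : B, (∀ b₂ : B, F (b₁ * b₂) = 0) → b₁ = 0)
    (ED : M →ₗ[ℂ] ↥D) (hED : ∀ m : M, (ED m : B) = F (E m))
    (κ : MultiplicativeMap ι) (hκ : IsCumulantMap ι E κ)
    (κD : MultiplicativeMap (ι.comp D.val)) (hκD : IsCumulantMap (ι.comp D.val) ED κD)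
    {N : ℕ} (X : Fin N → M) :
    (FreeWithAmalgamation (fun m => F (E m))
        (Algebra.adjoin ℂ (Set.range X ∪ (ι '' (D : Set B)))) ι.range
      ↔ ∀ (k : ℕ) (i : Fin (k + 1) → Fin N) (b : Fin k → B),
          cumulantSeries κ X i b = F (cumulantSeries κ X i fun j => F (b j)))
    ∧
    (FreeWithAmalgamation (fun m => F (E m))
        (Algebra.adjoin ℂ (Set.range X ∪ (ι '' (D : Set B)))) ι.range
      ↔ ∀ (k : ℕ) (i : Fin (k + 1) → Fin N) (b : Fin k → B),
          cumulantSeries κ X i b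
            = ((cumulantSeries κD X i fun j => (⟨F (b j), hFD (b j)⟩ : ↥D) : ↥D) : B)) := by
  let C : Ctx B M := { ι := ι, E := E, hE := hE, D := D, F := F, hFD := hFD, hFid := hFid,
                       hFbimod := hFbimod, hFfaithful := hFfaithful, ED := ED, hED := hED,
                       κ := κ, hκ := hκ, κD := κD, hκD := hκD, N := N, X := X }
  constructor
  · refine (C.Fr_iff_one.trans list_tuple).trans ?_
    simp only [cumulantSeries, Ctx.arg, Ctx.argF, List.map_map, Function.comp_def]
    rfl
  · refine (C.Fr_iff_two.trans list_tuple).trans ?_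
    simp only [cumulantSeries, Ctx.arg, Ctx.argF, List.map_map, Function.comp_def]
    rfl
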